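/- arXiv:1508.07408 — 6 statements merged into one kernel-verified Lean document; each statement's English description precedes it below -/
import Mathlib

section
/- Let α ≥ 1, ν = (1−α)/2 and λ > 0, and define y : (0,∞) → ℝ by y(x) = x^ν · J_{−ν}(x·√λ). Then y is twice differentiable on (0,∞), satisfies (x^α · y'(x))' + λ · x^α · y(x) = 0 for all x ∈ (0,1), y(x) tends to the finite limit (√λ/2)^{−ν}/Γ(1−ν) as x → 0+, and y'(x) → 0 as x → 0+ (so y is bounded in a neighbourhood of the origin and satisfies the boundary condition y'(0) = 0). -/
/-- The Bessel function of the first kind of real order `μ`,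
`J_μ(x) = ∑ (−1)^m/(m!·Γ(m+μ+1))·(x/2)^{2m+μ}` (terms with `Γ` at nonpositive
integers vanish, since `Real.Gamma` vanishes there). -/
noncomputable def besselJ (μ x : ℝ) : ℝ :=
  ∑' m : ℕ, ((-1 : ℝ) ^ m / ((m.factorial : ℝ) * Real.Gamma ((m : ℝ) + μ + 1))) *
    (x / 2) ^ (2 * (m : ℝ) + μ)

noncomputable def bF (μ t : ℝ) : ℝ :=
  ∑' m : ℕ, ((-1 : ℝ) ^ m / ((m.factorial : ℝ) * Real.Gamma ((m : ℝ) + μ + 1))) * t ^ m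

lemma bF_gamma_le (μ : ℝ) (hμ : 0 ≤ μ) (m : ℕ) :
    Real.Gamma (μ + 1) ≤ Real.Gamma ((m : ℝ) + μ + 1) := by
  induction m with
  | zero => simp
  | succ k ih =>
    have hk : (0 : ℝ) ≤ k := Nat.cast_nonneg k
    have h1 : ((k + 1 : ℕ) : ℝ) + μ + 1 = ((k : ℝ) + μ + 1) + 1 := by push_cast; ring
    have hp : 0 < (k : ℝ) + μ + 1 := by positivity
    rw [h1, Real.Gamma_add_one hp.ne']
    have h2 : 0 < Real.Gamma ((k : ℝ) + μ + 1) := Real.Gamma_pos_of_pos hp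
    have h3 : 0 ≤ ((k : ℝ) + μ) * Real.Gamma ((k : ℝ) + μ + 1) := by positivity
    linarith

lemma bF_coeff_le (μ : ℝ) (hμ : 0 ≤ μ) (m : ℕ) :
    ‖(-1 : ℝ) ^ m / ((m.factorial : ℝ) * Real.Gamma ((m : ℝ) + μ + 1))‖
      ≤ 1 / ((m.factorial : ℝ) * Real.Gamma (μ + 1)) := by
  have h0 : 0 < Real.Gamma (μ + 1) := Real.Gamma_pos_of_pos (by positivity)
  have h1 := bF_gamma_le μ hμ m
  have h2 : 0 < Real.Gamma ((m : ℝ) + μ + 1) := h0.trans_le h1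
  rw [norm_div, norm_pow, norm_neg, norm_one, one_pow, Real.norm_of_nonneg (by positivity)]
  gcongr

lemma bF_summable (μ : ℝ) (hμ : 0 ≤ μ) (t : ℝ) : Summable (fun m : ℕ =>
    ((-1 : ℝ) ^ m / ((m.factorial : ℝ) * Real.Gamma ((m : ℝ) + μ + 1))) * t ^ m) := by
  refine Summable.of_norm_bounded
    (g := fun m : ℕ => (1 / Real.Gamma (μ + 1)) * (|t| ^ m / (m.factorial : ℝ)))
    ((Real.summable_pow_div_factorial |t|).mul_left _) ?_
  intro m
  have h0 : 0 < Real.Gamma (μ + 1) := Real.Gamma_pos_of_pos (by positivity)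
  rw [norm_mul, norm_pow, Real.norm_eq_abs t]
  calc _ ≤ 1 / ((m.factorial : ℝ) * Real.Gamma (μ + 1)) * |t| ^ m := by
        gcongr; exact bF_coeff_le μ hμ m
    _ = _ := by field_simp

lemma bF_coeff_succ (μ : ℝ) (m : ℕ) (t : ℝ) :
    ((-1 : ℝ) ^ (m + 1) / (((m + 1).factorial : ℝ) * Real.Gamma (((m + 1 : ℕ) : ℝ) + μ + 1))) *
      (((m + 1 : ℕ) : ℝ) * t ^ (m + 1 - 1)) =
    -(((-1 : ℝ) ^ m / ((m.factorial : ℝ) * Real.Gamma ((m : ℝ) + (μ + 1) + 1))) * t ^ m) := by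
  have h1 : ((m + 1 : ℕ) : ℝ) + μ + 1 = (m : ℝ) + (μ + 1) + 1 := by push_cast; ring
  rw [h1, Nat.factorial_succ, Nat.add_sub_cancel, pow_succ]
  have h2 : ((m + 1 : ℕ) : ℝ) ≠ 0 := by positivity
  have h3 : (m.factorial : ℝ) ≠ 0 := by positivity
  push_cast at h2 ⊢
  rw [mul_assoc ((m : ℝ) + 1), mul_neg_one, neg_div, neg_mul, neg_inj, ← mul_assoc]
  congr 1
  rw [div_mul_eq_mul_div, mul_comm _ ((m : ℝ) + 1), mul_div_mul_left _ _ h2]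

lemma bF_hasDerivAt (μ : ℝ) (hμ : 0 ≤ μ) (t : ℝ) :
    HasDerivAt (bF μ) (-bF (μ + 1) t) t := by
  set R : ℝ := |t| + 1 with hR
  have h0 : 0 < Real.Gamma (μ + 1) := Real.Gamma_pos_of_pos (by positivity)
  have key := hasDerivAt_tsum_of_isPreconnected
    (u := fun m : ℕ => 1 / ((m.factorial : ℝ) * Real.Gamma (μ + 1)) * ((m : ℝ) * R ^ (m - 1)))
    (g := fun (m : ℕ) (t : ℝ) =>
      ((-1 : ℝ) ^ m / ((m.factorial : ℝ) * Real.Gamma ((m : ℝ) + μ + 1))) * t ^ m)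
    (g' := fun (m : ℕ) (t : ℝ) =>
      ((-1 : ℝ) ^ m / ((m.factorial : ℝ) * Real.Gamma ((m : ℝ) + μ + 1))) *
        ((m : ℝ) * t ^ (m - 1)))
    (t := Metric.ball (0 : ℝ) R) (y₀ := t) (y := t) ?_ Metric.isOpen_ball
    (convex_ball _ _).isPreconnected ?_ ?_ ?_ (bF_summable μ hμ t) ?_
  · have e : (∑' m : ℕ, ((-1 : ℝ) ^ m / ((m.factorial : ℝ) * Real.Gamma ((m : ℝ) + μ + 1))) *
        ((m : ℝ) * t ^ (m - 1))) = -bF (μ + 1) t := by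
      have hs := bF_summable (μ + 1) (by positivity) t
      rw [bF, ← tsum_neg, Summable.tsum_eq_zero_add]
      · rw [tsum_congr (fun m => bF_coeff_succ μ m t)]
        simp
      · rw [← summable_nat_add_iff 1]
        exact hs.neg.congr (fun m => (bF_coeff_succ μ m t).symm)
    rw [← e]
    exact key
  · rw [← summable_nat_add_iff 1]
    refine ((Real.summable_pow_div_factorial R).mul_left (1 / Real.Gamma (μ + 1))).congr ?_
    intro m
    rw [Nat.factorial_succ, Nat.add_sub_cancel]
    push_cast
    field_simp
  · intro m x _
    exact (hasDerivAt_pow m x).const_mul _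
  · intro m x hx
    rw [mem_ball_zero_iff] at hx
    rw [norm_mul, norm_mul, norm_pow, Real.norm_natCast]
    have := bF_coeff_le μ hμ m
    gcongr
  · simp [hR]
  · simp [hR]

lemma bF_rec (μ : ℝ) (hμ : 0 ≤ μ) (t : ℝ) :
    bF μ t = (μ + 1) * bF (μ + 1) t - t * bF (μ + 1 + 1) t := by
  have hs0 := bF_summable μ hμ t
  have hs1 := bF_summable (μ + 1) (by positivity) t
  have hs2 := bF_summable (μ + 1 + 1) (by positivity) t
  have hA : ∀ m : ℕ, ((-1 : ℝ) ^ m / ((m.factorial : ℝ) * Real.Gamma ((m : ℝ) + μ + 1))) * t ^ m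
      = (μ + 1) * (((-1 : ℝ) ^ m /
          ((m.factorial : ℝ) * Real.Gamma ((m : ℝ) + (μ + 1) + 1))) * t ^ m)
        + (m : ℝ) * (((-1 : ℝ) ^ m /
          ((m.factorial : ℝ) * Real.Gamma ((m : ℝ) + (μ + 1) + 1))) * t ^ m) := by
    intro m
    have hp : 0 < (m : ℝ) + μ + 1 := by positivity
    have h1 : (m : ℝ) + (μ + 1) + 1 = ((m : ℝ) + μ + 1) + 1 := by ring
    rw [h1, Real.Gamma_add_one hp.ne']
    have h2 := Real.Gamma_pos_of_pos hp
    field_simp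
    ring
  have hB : ∀ m : ℕ, ((m + 1 : ℕ) : ℝ) * (((-1 : ℝ) ^ (m + 1) /
          (((m + 1).factorial : ℝ) * Real.Gamma (((m + 1 : ℕ) : ℝ) + (μ + 1) + 1))) * t ^ (m + 1))
      = -t * (((-1 : ℝ) ^ m /
          ((m.factorial : ℝ) * Real.Gamma ((m : ℝ) + (μ + 1 + 1) + 1))) * t ^ m) := by
    intro m
    have := bF_coeff_succ (μ + 1) m t
    rw [Nat.add_sub_cancel] at this
    rw [neg_mul, ← mul_neg, ← this]
    ring
  have hs3 : Summable (fun m : ℕ => (m : ℝ) * (((-1 : ℝ) ^ m /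
          ((m.factorial : ℝ) * Real.Gamma ((m : ℝ) + (μ + 1) + 1))) * t ^ m)) := by
    rw [← summable_nat_add_iff 1]
    exact (hs2.mul_left (-t)).congr (fun m => (hB m).symm)
  rw [bF, tsum_congr hA, (hs1.mul_left (μ + 1)).tsum_add hs3, tsum_mul_left,
    hs3.tsum_eq_zero_add, tsum_congr hB, tsum_mul_left]
  simp only [bF]
  push_cast
  ring

lemma bF_bessel (μ s x : ℝ) (hs : 0 < s) (hx : 0 < x) :
    x ^ (-μ) * besselJ μ (x * s) = (s / 2) ^ μ * bF μ (s ^ 2 / 4 * x ^ 2) := by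
  rw [besselJ, bF, ← tsum_mul_left, ← tsum_mul_left]
  refine tsum_congr fun m => ?_
  have h1 : (x * s / 2) ^ (2 * (m : ℝ) + μ) =
      (s ^ 2 / 4 * x ^ 2) ^ m * ((s / 2) ^ μ * x ^ μ) := by
    rw [Real.rpow_add (by positivity), ← Real.mul_rpow (by positivity) (by positivity)]
    congr 1
    · rw [show (2 * (m : ℝ)) = ((2 * m : ℕ) : ℝ) by push_cast; ring, Real.rpow_natCast, pow_mul]
      congr 1; ring
    · congr 1; ring
  rw [h1, Real.rpow_neg hx.le]
  have : x ^ μ ≠ 0 := (Real.rpow_pos_of_pos hx μ).ne'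
  field_simp

/-- For `α ≥ 1`, `ν = (1−α)/2` and `λ > 0`, the function `y(x) = x^ν·J_{−ν}(x√λ)`
is twice differentiable on `(0,∞)`, satisfies `(x^α y')' + λ x^α y = 0` on `(0,1)`,
tends to `(√λ/2)^{−ν}/Γ(1−ν)` as `x → 0⁺`, and `y'(x) → 0` as `x → 0⁺`. -/
theorem bounded_solution_pos_lambda (α lam : ℝ) (hα : 1 ≤ α) (hlam : 0 < lam) :
    let ν : ℝ := (1 - α) / 2
    let y : ℝ → ℝ := fun x => x ^ ν * besselJ (-ν) (x * Real.sqrt lam)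
    (∀ x > (0 : ℝ), DifferentiableAt ℝ y x) ∧
    (∀ x > (0 : ℝ), DifferentiableAt ℝ (deriv y) x) ∧
    (∀ x ∈ Set.Ioo (0 : ℝ) 1,
      deriv (fun x : ℝ => x ^ α * deriv y x) x + lam * x ^ α * y x = 0) ∧
    Filter.Tendsto y (nhdsWithin 0 (Set.Ioi 0))
      (nhds ((Real.sqrt lam / 2) ^ (-ν) / Real.Gamma (1 - ν))) ∧
    Filter.Tendsto (deriv y) (nhdsWithin 0 (Set.Ioi 0)) (nhds 0) := by
  intro ν y
  set μ : ℝ := (α - 1) / 2 with hμd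
  have hμ : 0 ≤ μ := by rw [hμd]; linarith
  have hν : ν = -μ := by simp only [ν, hμd]; ring
  set s := Real.sqrt lam with hsd
  have hs : 0 < s := Real.sqrt_pos.2 hlam
  have hss : s ^ 2 = lam := Real.sq_sqrt hlam.le
  set C : ℝ := (s / 2) ^ μ
  set k : ℝ := lam / 4 with hk
  have hy : ∀ x > 0, y x = C * bF μ (k * x ^ 2) := by
    intro x hx
    have := bF_bessel μ s x hs hx
    rw [hss] at this
    simp only [y, hν, neg_neg]
    exact this
  have hin : ∀ x : ℝ, HasDerivAt (fun x : ℝ => k * x ^ 2) (k * (2 * x)) x := by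
    intro x
    simpa using (hasDerivAt_pow 2 x).const_mul k
  have hcomp : ∀ μ' : ℝ, 0 ≤ μ' → ∀ x : ℝ, HasDerivAt (fun x : ℝ => bF μ' (k * x ^ 2))
      (-bF (μ' + 1) (k * x ^ 2) * (k * (2 * x))) x := fun μ' h x =>
    HasDerivAt.comp (h₂ := bF μ') x (bF_hasDerivAt μ' h (k * x ^ 2)) (hin x)
  have hd : ∀ x > 0, HasDerivAt y (C * (-bF (μ + 1) (k * x ^ 2) * (k * (2 * x)))) x := by
    intro x hx
    refine ((hcomp μ hμ x).const_mul C).congr_of_eventuallyEq ?_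
    filter_upwards [Ioi_mem_nhds hx] with z hz using hy z hz
  have hdy : ∀ x > 0, deriv y x = C * (-bF (μ + 1) (k * x ^ 2) * (k * (2 * x))) :=
    fun x hx => (hd x hx).deriv
  have hμ1 : 0 ≤ μ + 1 := by positivity
  have hdd : ∀ x : ℝ, HasDerivAt (fun x : ℝ => C * (-bF (μ + 1) (k * x ^ 2) * (k * (2 * x))))
      (C * (-(-bF (μ + 1 + 1) (k * x ^ 2) * (k * (2 * x))) * (k * (2 * x))
        + -bF (μ + 1) (k * x ^ 2) * (k * 2))) x := by
    intro x
    have h2 : HasDerivAt (fun x : ℝ => k * (2 * x)) (k * 2) x := by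
      simpa using ((hasDerivAt_id x).const_mul 2).const_mul k
    exact (((hcomp (μ + 1) hμ1 x).neg).mul h2).const_mul C
  have hd2 : ∀ x > 0, HasDerivAt (deriv y)
      (C * (-(-bF (μ + 1 + 1) (k * x ^ 2) * (k * (2 * x))) * (k * (2 * x))
        + -bF (μ + 1) (k * x ^ 2) * (k * 2))) x := by
    intro x hx
    refine (hdd x).congr_of_eventuallyEq ?_
    filter_upwards [Ioi_mem_nhds hx] with z hz using hdy z hz
  refine ⟨fun x hx => (hd x hx).differentiableAt, fun x hx => (hd2 x hx).differentiableAt,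
    ?_, ?_, ?_⟩
  · rintro x ⟨hx, -⟩
    have h1 := (Real.hasDerivAt_rpow_const (p := α) (Or.inl hx.ne')).mul (hd2 x hx)
    have h1' : deriv (fun x : ℝ => x ^ α * deriv y x) x = _ := h1.deriv
    rw [h1', hdy x hx, hy x hx, bF_rec μ hμ]
    have h2 : x ^ α = x ^ (α - 1) * x := by
      rw [← Real.rpow_add_one hx.ne']; ring_nf
    have h3 : α = 2 * μ + 1 := by rw [hμd]; ring
    have h4 : lam = 4 * k := by rw [hk]; ring
    rw [h2, h4]
    generalize x ^ (α - 1) = w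
    rw [h3]
    ring
  · have hc : Filter.Tendsto (fun x : ℝ => C * bF μ (k * x ^ 2)) (nhdsWithin 0 (Set.Ioi 0))
        (nhds (C * bF μ (k * 0 ^ 2))) :=
      ((hcomp μ hμ 0).const_mul C).continuousAt.tendsto.mono_left nhdsWithin_le_nhds
    have h0 : bF μ 0 = 1 / Real.Gamma (μ + 1) := by
      rw [bF, tsum_eq_single 0]
      · simp
      · intro m hm; simp [hm]
    have e : (s / 2) ^ (-ν) / Real.Gamma (1 - ν) = C * bF μ (k * 0 ^ 2) := by
      rw [hν, neg_neg, sub_neg_eq_add, add_comm 1 μ]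
      simp only [ne_eq, OfNat.ofNat_ne_zero, not_false_eq_true, zero_pow, mul_zero, h0, C]
      ring
    rw [e]
    refine hc.congr' ?_
    filter_upwards [self_mem_nhdsWithin] with z hz using (hy z hz).symm
  · have hc := (hdd 0).continuousAt.tendsto.mono_left (nhdsWithin_le_nhds (s := Set.Ioi 0))
    simp only [mul_zero] at hc
    refine hc.congr' ?_
    filter_upwards [self_mem_nhdsWithin] with z hz using (hdy z hz).symm
end

section
/- Let n ≥ 1 be a natural number, let α ∈ (4n−3, 4n−1), set ν = (1−α)/2, and let λ satisfy 0 < λ < j_{ν,1}². Then for all real numbers r, s with 0 < r ≤ s ≤ 1, r^ν · (J_{−ν}(s·√λ)·J_ν(r·√λ) − J_ν(s·√λ)·J_{−ν}(r·√λ)) ≥ 0. -/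
noncomputable def bC (μ : ℝ) (m : ℕ) : ℝ :=
  (-1 : ℝ) ^ m / ((m.factorial : ℝ) * Real.Gamma ((m : ℝ) + μ + 1))

noncomputable def bG (μ y : ℝ) : ℝ := ∑' m : ℕ, bC μ m * y ^ m

lemma bC_succ (μ : ℝ) (m : ℕ) (h : (m : ℝ) + μ + 1 ≠ 0) :
    ((m : ℝ) + 1) * ((m : ℝ) + μ + 1) * bC μ (m + 1) = - bC μ m := by
  unfold bC
  have e : ((m + 1 : ℕ) : ℝ) + μ + 1 = ((m : ℝ) + μ + 1) + 1 := by push_cast; ring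
  rw [e, Real.Gamma_add_one h, Nat.factorial_succ]
  have h1 : (m : ℝ) + 1 ≠ 0 := by positivity
  have h2 : (m.factorial : ℝ) ≠ 0 := by positivity
  push_cast
  by_cases hG : Real.Gamma ((m : ℝ) + μ + 1) = 0
  · simp [hG]
  · field_simp
    ring

lemma bC_shift (μ : ℝ) (m : ℕ) : ((m : ℝ) + 1) * bC μ (m + 1) = - bC (μ + 1) m := by
  unfold bC
  have e : ((m + 1 : ℕ) : ℝ) + μ + 1 = (m : ℝ) + (μ + 1) + 1 := by push_cast; ring
  rw [e, Nat.factorial_succ]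
  have h1 : (m : ℝ) + 1 ≠ 0 := by positivity
  have h2 : (m.factorial : ℝ) ≠ 0 := by positivity
  push_cast
  by_cases hG : Real.Gamma ((m : ℝ) + (μ + 1) + 1) = 0
  · simp [hG]
  · field_simp
    ring

lemma bC_summable (μ y : ℝ) : Summable (fun m : ℕ => bC μ m * y ^ m) := by
  apply summable_of_ratio_norm_eventually_le (r := 1 / 2) (by norm_num)
  obtain ⟨N, hN⟩ := exists_nat_ge (|μ| + 2 * |y|)
  filter_upwards [Filter.eventually_ge_atTop N] with m hm
  have hm' : |μ| + 2 * |y| ≤ m := hN.trans (by exact_mod_cast hm)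
  have hy := abs_nonneg y
  have hmu := neg_abs_le μ
  have ha := abs_nonneg μ
  have hge : (1 : ℝ) ≤ (m : ℝ) + μ + 1 := by linarith
  have h := bC_succ μ m (by linarith)
  have h2 : ((m : ℝ) + 1) * ((m : ℝ) + μ + 1) * |bC μ (m + 1)| = |bC μ m| := by
    rw [← abs_neg (bC μ m), ← h, abs_mul, abs_of_nonneg (a := ((m : ℝ) + 1) * ((m : ℝ) + μ + 1))]
    apply mul_nonneg <;> linarith
  have h3 : 2 * |y| ≤ ((m : ℝ) + 1) * ((m : ℝ) + μ + 1) := by nlinarith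
  have h4 : 2 * |y| * |bC μ (m + 1)| ≤ |bC μ m| := by
    rw [← h2]; exact mul_le_mul_of_nonneg_right h3 (abs_nonneg _)
  simp only [Real.norm_eq_abs, abs_mul, abs_pow]
  rw [pow_succ]
  have h5 := mul_le_mul_of_nonneg_right h4 (pow_nonneg hy m)
  nlinarith

lemma bG_deriv (μ y : ℝ) : HasDerivAt (bG μ) (- bG (μ + 1) y) y := by
  set R := |y| + 1 with hR
  have hR0 : 0 < R := by positivity
  have key := hasDerivAt_tsum_of_isPreconnected (𝕜 := ℝ)
    (g := fun (m : ℕ) (z : ℝ) => bC μ m * z ^ m)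
    (g' := fun (m : ℕ) (z : ℝ) => bC μ m * (m * z ^ (m - 1)))
    (u := fun m => |bC μ m| * (m * R ^ (m - 1)))
    (t := Metric.ball 0 R) (y₀ := 0) (y := y) ?_ Metric.isOpen_ball
    (convex_ball _ _).isPreconnected ?_ ?_ (by simpa using hR0) (bC_summable μ 0)
    (by simp [hR])
  · refine HasDerivAt.congr_deriv (f := bG μ) key ?_
    symm
    have hs : Summable (fun m : ℕ => bC μ m * (m * y ^ (m - 1))) := by
      rw [← summable_nat_add_iff 1]
      refine (bC_summable (μ + 1) y).neg.congr fun m => ?_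
      rw [← neg_mul, ← bC_shift]; simp only [Nat.add_sub_cancel]; push_cast; ring
    rw [hs.tsum_eq_zero_add]
    simp only [bG, ← tsum_neg]
    simp only [CharP.cast_eq_zero, zero_mul, mul_zero, zero_add]
    refine tsum_congr fun m => ?_
    rw [← neg_mul, ← bC_shift]; simp only [Nat.add_sub_cancel]; push_cast; ring
  · rw [← summable_nat_add_iff 1]
    refine (bC_summable (μ + 1) R).abs.congr fun m => ?_
    rw [abs_mul, ← abs_neg, ← bC_shift, abs_mul, abs_of_nonneg (a := (m : ℝ) + 1) (by positivity),
      abs_of_nonneg (a := R ^ m) (by positivity)]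
    simp only [Nat.add_sub_cancel]; push_cast; ring
  · intro m z _
    exact (hasDerivAt_pow m z).const_mul _
  · intro m z hz
    have hz' : |z| ≤ R := by simpa using (Metric.mem_ball.1 hz).le
    simp only [Real.norm_eq_abs, abs_mul, abs_pow, Nat.abs_cast]
    gcongr

lemma bG_ode (μ y : ℝ) (h : ∀ m : ℕ, (m : ℝ) + μ + 1 ≠ 0) :
    y * bG (μ + 1 + 1) y - (μ + 1) * bG (μ + 1) y + bG μ y = 0 := by
  have s0 := bC_summable μ y
  have s1 := bC_summable (μ + 1) y
  have s2 := bC_summable (μ + 1 + 1) y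
  -- y G_{μ+2} = ∑ -m * bC (μ+1) m y^m
  have e2 : y * bG (μ + 1 + 1) y = ∑' m : ℕ, (-(m : ℝ) * bC (μ + 1) m * y ^ m) := by
    have hs : Summable (fun m : ℕ => (-(m : ℝ) * bC (μ + 1) m * y ^ m)) := by
      rw [← summable_nat_add_iff 1]
      refine (s2.mul_left y).congr fun m => ?_
      have := bC_shift (μ + 1) m
      rw [← neg_eq_iff_eq_neg] at this
      rw [← this]; push_cast; ring
    rw [hs.tsum_eq_zero_add, bG, ← tsum_mul_left]
    simp only [CharP.cast_eq_zero, neg_zero, zero_mul, zero_add]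
    refine tsum_congr fun m => ?_
    have := bC_shift (μ + 1) m
    rw [← neg_eq_iff_eq_neg] at this
    rw [← this]; push_cast; ring
  have e0 : bG μ y = ∑' m : ℕ, ((m : ℝ) * bC (μ + 1) m * y ^ m + (μ + 1) * (bC (μ + 1) m * y ^ m)) := by
    refine tsum_congr fun m => ?_
    have h1 := bC_succ μ m (h m)
    have h2 := bC_shift μ m
    have : bC μ m = ((m : ℝ) + μ + 1) * bC (μ + 1) m := by linear_combination h1 - ((m : ℝ) + μ + 1) * h2
    rw [this]; ring
  have hs : Summable (fun m : ℕ => ((m : ℝ) * bC (μ + 1) m * y ^ m)) := by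
    rw [← summable_nat_add_iff 1]
    refine (s2.mul_left y).neg.congr fun m => ?_
    have := bC_shift (μ + 1) m
    rw [← neg_eq_iff_eq_neg] at this
    rw [← this]; push_cast; ring
  rw [e2, e0, hs.tsum_add (s1.mul_left _), tsum_mul_left, ← bG]
  simp only [neg_mul, tsum_neg]
  ring

lemma bG_zero (μ : ℝ) : bG μ 0 = 1 / Real.Gamma (μ + 1) := by
  unfold bG
  rw [tsum_eq_single 0]
  · simp [bC]
  · intro m hm; simp [hm]

lemma besselJ_eq (μ x : ℝ) (hx : 0 < x) :
    besselJ μ x = (x / 2) ^ μ * bG μ ((x / 2) ^ 2) := by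
  unfold besselJ bG
  rw [← tsum_mul_left]
  refine tsum_congr fun m => ?_
  have h : 0 < x / 2 := by positivity
  rw [Real.rpow_add h, ← pow_mul, ← Real.rpow_natCast (x / 2) (2 * m)]
  unfold bC
  push_cast
  ring

lemma bG_wronsk (κ : ℝ) (h1 : ∀ m : ℕ, (m : ℝ) + κ + 1 ≠ 0) (h2 : ∀ m : ℕ, (m : ℝ) + -κ + 1 ≠ 0)
    (y : ℝ) : κ * (bG (-κ) y * bG κ y) + y * (- bG (κ + 1) y * bG (-κ) y + bG κ y * bG (-κ + 1) y)
      = κ * (bG (-κ) 0 * bG κ 0) := by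
  have hd : ∀ y, HasDerivAt (fun y => κ * (bG (-κ) y * bG κ y) +
      y * (- bG (κ + 1) y * bG (-κ) y + bG κ y * bG (-κ + 1) y)) 0 y := by
    intro y
    have dA := bG_deriv (-κ) y
    have dA' := bG_deriv (-κ + 1) y
    have dB := bG_deriv κ y
    have dB' := bG_deriv (κ + 1) y
    refine HasDerivAt.congr_deriv (((dA.mul dB).const_mul κ).add
      ((hasDerivAt_id y).mul ((dB'.neg.mul dA).add (dB.mul dA')))) ?_
    simp only [Pi.add_apply, Pi.mul_apply, Pi.neg_apply, id]
    have oA := bG_ode (-κ) y h2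
    have oB := bG_ode κ y h1
    linear_combination bG (-κ) y * oB - bG κ y * oA
  have := is_const_of_deriv_eq_zero (fun y => (hd y).differentiableAt) (fun y => (hd y).deriv) y 0
  simpa using this

lemma gamma_pos (n : ℕ) (hn : 1 ≤ n) (κ : ℝ) (h1 : 2 * (n : ℝ) - 2 < κ) (h2 : κ < 2 * n - 1) :
    0 < Real.Gamma (-κ + 1) := by
  have hk : 0 < κ := by
    have : (1 : ℝ) ≤ n := by exact_mod_cast hn
    linarith
  have h := Real.Gamma_mul_Gamma_one_sub κ
  have hs : 0 < Real.sin (Real.pi * κ) := by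
    have e : Real.sin (Real.pi * κ) = Real.sin (Real.pi * κ - (n - 1 : ℤ) * (2 * Real.pi)) := by
      rw [Real.sin_sub_int_mul_two_pi]
    rw [e]
    have := Real.pi_pos
    apply Real.sin_pos_of_pos_of_lt_pi <;> push_cast <;> nlinarith
  have hG := Real.Gamma_pos_of_pos hk
  have : 0 < Real.Gamma κ * Real.Gamma (1 - κ) := by rw [h]; exact div_pos Real.pi_pos hs
  rw [show -κ + 1 = 1 - κ by ring]
  exact (pos_iff_pos_of_mul_pos this).1 hG

lemma bG_main (κ : ℝ) (hk : 0 < κ) (h1 : ∀ m : ℕ, (m : ℝ) + κ + 1 ≠ 0)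
    (h2 : ∀ m : ℕ, (m : ℝ) + -κ + 1 ≠ 0) (hG : 0 < Real.Gamma (-κ + 1)) (z y : ℝ)
    (hz : 0 < z) (hzy : z ≤ y) (hA : ∀ t ∈ Set.Icc z y, bG (-κ) t ≠ 0) :
    z ^ κ * bG κ z * bG (-κ) y ≤ y ^ κ * bG κ y * bG (-κ) z := by
  have hcont : Continuous (bG (-κ)) :=
    continuous_iff_continuousAt.2 fun t => (bG_deriv (-κ) t).continuousAt
  have hW0 : 0 < κ * (bG (-κ) 0 * bG κ 0) := by
    rw [bG_zero, bG_zero]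
    have := Real.Gamma_pos_of_pos (show 0 < κ + 1 by linarith)
    positivity
  have hd : ∀ t ∈ Set.Icc z y, HasDerivAt (fun t => t ^ κ * bG κ t / bG (-κ) t)
      (t ^ (κ - 1) * (κ * (bG (-κ) 0 * bG κ 0)) / bG (-κ) t ^ 2) t := by
    intro t ht
    have ht0 : 0 < t := hz.trans_le ht.1
    refine HasDerivAt.congr_deriv
      (((Real.hasDerivAt_rpow_const (p := κ) (Or.inl ht0.ne')).mul (bG_deriv κ t)).div
      (bG_deriv (-κ) t) (hA t ht)) ?_
    congr 1
    rw [← bG_wronsk κ h1 h2 t]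
    have : t ^ κ = t ^ (κ - 1) * t := by
      rw [Real.rpow_sub_one ht0.ne']; field_simp
    simp only [Pi.mul_apply]
    rw [this]; ring
  have hmono : MonotoneOn (fun t => t ^ κ * bG κ t / bG (-κ) t) (Set.Icc z y) := by
    apply monotoneOn_of_deriv_nonneg (convex_Icc z y)
    · exact fun t ht => (hd t ht).continuousAt.continuousWithinAt
    · exact fun t ht => (hd t (interior_subset ht)).differentiableAt.differentiableWithinAt
    · intro t ht
      have ht' := interior_subset ht
      rw [(hd t ht').deriv]
      have ht0 : 0 < t := hz.trans_le ht'.1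
      positivity
  have hle := hmono (Set.left_mem_Icc.2 hzy) (Set.right_mem_Icc.2 hzy) hzy
  simp only at hle
  have hAz := hA z (Set.left_mem_Icc.2 hzy)
  have hAy := hA y (Set.right_mem_Icc.2 hzy)
  have hpos : 0 < bG (-κ) z * bG (-κ) y := by
    by_contra hneg
    have hneg : bG (-κ) z * bG (-κ) y ≤ 0 := not_lt.1 hneg
    have h0 : (0 : ℝ) ∈ Set.uIcc (bG (-κ) z) (bG (-κ) y) := by
      rw [Set.mem_uIcc]
      rcases mul_nonpos_iff.1 hneg with h | h
      · right; exact ⟨h.2, h.1⟩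
      · left; exact h
    obtain ⟨t, ht, ht0⟩ := intermediate_value_uIcc (hcont.continuousOn) h0
    rw [Set.uIcc_of_le hzy] at ht
    exact hA t ht ht0
  have := mul_le_mul_of_nonneg_right hle hpos.le
  have e1 : z ^ κ * bG κ z / bG (-κ) z * (bG (-κ) z * bG (-κ) y) = z ^ κ * bG κ z * bG (-κ) y := by
    field_simp
  have e2 : y ^ κ * bG κ y / bG (-κ) y * (bG (-κ) z * bG (-κ) y) = y ^ κ * bG κ y * bG (-κ) z := by
    field_simp
  rw [e1, e2] at this
  exact this

theorem besselJ_combination_nonneg (n : ℕ) (hn : 1 ≤ n) (α lam ν : ℝ)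
    (hα1 : 4 * (n : ℝ) - 3 < α) (hα2 : α < 4 * (n : ℝ) - 1)
    (hν : ν = (1 - α) / 2)
    (hlam : 0 < lam)
    (hzero : ∀ t : ℝ, 0 < t → t ≤ Real.sqrt lam → besselJ ν t ≠ 0) :
    ∀ r s : ℝ, 0 < r → r ≤ s → s ≤ 1 →
      0 ≤ r ^ ν * (besselJ (-ν) (s * Real.sqrt lam) * besselJ ν (r * Real.sqrt lam)
        - besselJ ν (s * Real.sqrt lam) * besselJ (-ν) (r * Real.sqrt lam)) := by
  intro r s hr hrs hs
  obtain ⟨κ, rfl⟩ : ∃ κ, ν = -κ := ⟨-ν, by ring⟩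
  have hn' : (1 : ℝ) ≤ n := by exact_mod_cast hn
  have hk1 : 2 * (n : ℝ) - 2 < κ := by linarith
  have hk2 : κ < 2 * n - 1 := by linarith
  have hk : 0 < κ := by linarith
  have hL := Real.sqrt_pos.2 hlam
  set L := Real.sqrt lam
  have h1 : ∀ m : ℕ, (m : ℝ) + κ + 1 ≠ 0 := fun m => by positivity
  have h2 : ∀ m : ℕ, (m : ℝ) + -κ + 1 ≠ 0 := by
    intro m h
    have a : (2 * n : ℝ) < m + 1 + 2 := by linarith
    have b : (m + 1 + 1 : ℝ) < 2 * n := by linarith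
    have a' : 2 * n < m + 1 + 2 := by exact_mod_cast a
    have b' : m + 1 + 1 < 2 * n := by exact_mod_cast b
    omega
  have hG := gamma_pos n hn κ hk1 hk2
  have hs0 : 0 < s := hr.trans_le hrs
  have hp : 0 < s * L / 2 := by positivity
  have hq : 0 < r * L / 2 := by positivity
  have hqp : r * L / 2 ≤ s * L / 2 := by gcongr
  have hpL : s * L / 2 ≤ L / 2 := by nlinarith
  rw [neg_neg, besselJ_eq _ _ (by positivity), besselJ_eq _ _ (by positivity),
    besselJ_eq _ _ (by positivity), besselJ_eq _ _ (by positivity)]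
  set p := s * L / 2
  set q := r * L / 2
  have key := bG_main κ hk h1 h2 hG (q ^ 2) (p ^ 2) (by positivity) (by gcongr) (by
    intro t ht h0
    have ht0 : 0 < t := lt_of_lt_of_le (by positivity) ht.1
    have hst := Real.sqrt_pos.2 ht0
    have hle : Real.sqrt t ≤ p := by
      rw [← Real.sqrt_sq hp.le]; exact Real.sqrt_le_sqrt ht.2
    apply hzero (2 * Real.sqrt t) (by positivity) (by linarith)
    rw [besselJ_eq _ _ (by positivity), mul_div_cancel_left₀ _ (by norm_num : (2 : ℝ) ≠ 0),
      Real.sq_sqrt ht0.le, h0, mul_zero])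
  have ep : (p ^ 2) ^ κ = p ^ κ * p ^ κ := by rw [sq, Real.mul_rpow hp.le hp.le]
  have eq' : (q ^ 2) ^ κ = q ^ κ * q ^ κ := by rw [sq, Real.mul_rpow hq.le hq.le]
  rw [ep, eq'] at key
  have hpk := Real.rpow_pos_of_pos hp κ
  have hqk := Real.rpow_pos_of_pos hq κ
  apply mul_nonneg (Real.rpow_pos_of_pos hr _).le
  rw [Real.rpow_neg hp.le, Real.rpow_neg hq.le]
  have e : p ^ κ * bG κ (p ^ 2) * ((q ^ κ)⁻¹ * bG (-κ) (q ^ 2)) -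
      (p ^ κ)⁻¹ * bG (-κ) (p ^ 2) * (q ^ κ * bG κ (q ^ 2)) =
      (p ^ κ)⁻¹ * (q ^ κ)⁻¹ * (p ^ κ * p ^ κ * bG κ (p ^ 2) * bG (-κ) (q ^ 2) -
        q ^ κ * q ^ κ * bG κ (q ^ 2) * bG (-κ) (p ^ 2)) := by
    field_simp
  rw [e]
  apply mul_nonneg (by positivity)
  linarith
end

section
/- Let n ≥ 1 be a natural number, let α ∈ (4n−1, 4n+1), set ν = (1−α)/2, and let λ satisfy 0 < λ < j_{ν,1}². Then for all real numbers r, s₀ with 0 < r ≤ s₀ ≤ 1, J_{−ν}(s₀·√λ)·J_{ν−1}(r·√λ) + J_ν(s₀·√λ)·J_{1−ν}(r·√λ) ≥ 0. -/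
namespace BesselAux

noncomputable def c (μ : ℝ) (m : ℕ) : ℝ :=
  (-1 : ℝ) ^ m / ((m.factorial : ℝ) * Real.Gamma ((m : ℝ) + μ + 1))

noncomputable def E (μ y : ℝ) : ℝ := ∑' m : ℕ, c μ m * y ^ m

lemma c_shift (μ : ℝ) (m : ℕ) : ((m : ℝ) + 1) * c μ (m + 1) = - c (μ + 1) m := by
  unfold c
  have h : ((m + 1 : ℕ) : ℝ) + μ + 1 = (m : ℝ) + (μ + 1) + 1 := by push_cast; ring
  rw [h, Nat.factorial_succ, pow_succ]
  have h1 : ((m : ℝ) + 1) ≠ 0 := by positivity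
  have h2 : (m.factorial : ℝ) ≠ 0 := by positivity
  push_cast
  by_cases h3 : Real.Gamma ((m : ℝ) + (μ + 1) + 1) = 0
  · simp [h3]
  · field_simp

lemma c_down (μ : ℝ) (m : ℕ) : ((m : ℝ) + μ) * c μ m = c (μ - 1) m := by
  unfold c
  have h : (m : ℝ) + (μ - 1) + 1 = (m : ℝ) + μ := by ring
  rw [h]
  by_cases h0 : (m : ℝ) + μ = 0
  · simp [h0, Real.Gamma_zero]
  · rw [Real.Gamma_add_one h0]
    have h2 : (m.factorial : ℝ) ≠ 0 := by positivity
    by_cases h3 : Real.Gamma ((m : ℝ) + μ) = 0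
    · simp [h3]
    · field_simp

lemma summable_E (μ y : ℝ) : Summable (fun m => c μ m * y ^ m) := by
  apply summable_of_ratio_norm_eventually_le (r := 1 / 2) (by norm_num)
  obtain ⟨N, hN⟩ := exists_nat_gt (2 * |y| + |μ| + 1)
  filter_upwards [Filter.eventually_ge_atTop N] with m hm
  have hm' : (N : ℝ) ≤ m := by exact_mod_cast hm
  have hμ := neg_abs_le μ
  have hy := abs_nonneg y
  have hpos : 2 * |y| ≤ (m : ℝ) + μ + 1 := by linarith
  have hpos' : 0 < (m : ℝ) + μ + 1 := by linarith
  have e1 := c_shift μ m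
  have e2 := c_down (μ + 1) m
  rw [add_sub_cancel_right] at e2
  have e3 : c μ m = -(((m : ℝ) + μ + 1) * (((m : ℝ) + 1) * c μ (m + 1))) := by
    rw [e1, ← e2]; ring
  have hm1 : (1 : ℝ) ≤ (m : ℝ) + 1 := by
    have : (0 : ℝ) ≤ m := Nat.cast_nonneg m
    linarith
  rw [e3, pow_succ]
  simp only [Real.norm_eq_abs, abs_mul, abs_neg, abs_of_pos hpos']
  rw [abs_of_pos (by linarith : (0 : ℝ) < (m : ℝ) + 1)]
  have key : |y| ≤ 1 / 2 * (((m : ℝ) + μ + 1) * ((m : ℝ) + 1)) := by nlinarith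
  have hh : 0 ≤ |c μ (m + 1)| * |y ^ m| := by positivity
  nlinarith [mul_le_mul_of_nonneg_left key hh]

lemma hasDeriv_E (μ y : ℝ) : HasDerivAt (E μ) (- E (μ + 1) y) y := by
  have hR : |y| < |y| + 1 := by linarith
  set R := |y| + 1 with hRdef
  have hR0 : 0 ≤ R := by positivity
  have hu : Summable (fun m : ℕ => |c μ m| * m * R ^ (m - 1)) := by
    rw [← summable_nat_add_iff 1]
    refine ((summable_E (μ + 1) R).abs).congr fun m => ?_
    have e1 := c_shift μ m
    rw [abs_mul, abs_of_nonneg (pow_nonneg hR0 m), ← abs_neg (c (μ + 1) m), ← e1, abs_mul,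
      abs_of_nonneg (by positivity : (0 : ℝ) ≤ (m : ℝ) + 1)]
    push_cast
    ring
  have H := hasDerivAt_tsum_of_isPreconnected (𝕜 := ℝ) (F := ℝ)
    (g := fun (m : ℕ) z => c μ m * z ^ m)
    (g' := fun (m : ℕ) z => c μ m * (m * z ^ (m - 1))) (t := Metric.ball (0 : ℝ) R)
    hu Metric.isOpen_ball (convex_ball (0 : ℝ) R).isPreconnected
    (fun m z _ => (hasDerivAt_pow m z).const_mul _)
    (fun m z hz => by
      have hz' : |z| ≤ R := by simpa using (Metric.mem_ball.1 hz).le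
      rw [Real.norm_eq_abs, abs_mul, abs_mul, abs_pow, Nat.abs_cast, mul_assoc]
      gcongr)
    (y₀ := y) (y := y) (by simpa using hR) (summable_E μ y) (by simpa using hR)
  have hs : ∑' m : ℕ, c μ m * (m * y ^ (m - 1)) = - E (μ + 1) y := by
    have hsum : Summable (fun m : ℕ => c μ m * (m * y ^ (m - 1))) := by
      rw [← summable_nat_add_iff 1]
      refine ((summable_E (μ + 1) y).neg).congr fun m => ?_
      rw [← neg_mul, ← c_shift]
      push_cast
      ring
    rw [hsum.tsum_eq_zero_add]
    unfold E
    rw [← tsum_neg]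
    simp only [Nat.cast_zero, zero_mul, mul_zero, zero_add]
    refine tsum_congr fun m => ?_
    rw [← neg_mul, ← c_shift]
    push_cast
    ring
  rw [hs] at H
  exact H

lemma contig (μ y : ℝ) : E (μ - 1) y = μ * E μ y - y * E (μ + 1) y := by
  have hs1 := (summable_E (μ - 1) y)
  have h1 := (summable_E μ y)
  have h2 := (summable_E (μ + 1) y)
  have h3 : Summable (fun m : ℕ => (m : ℝ) * (c μ m * y ^ m)) := by
    refine (hs1.sub (h1.mul_left μ)).congr fun m => ?_
    rw [← c_down]; ring
  have e3 : ∑' m : ℕ, (m : ℝ) * (c μ m * y ^ m) = - (y * E (μ + 1) y) := by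
    rw [h3.tsum_eq_zero_add]
    unfold E
    rw [← tsum_mul_left, ← tsum_neg]
    simp only [Nat.cast_zero, zero_mul, zero_add]
    refine tsum_congr fun m => ?_
    have := c_shift μ m
    push_cast
    rw [pow_succ]
    linear_combination y ^ m * y * this
  have : E (μ - 1) y = μ * E μ y + ∑' m : ℕ, (m : ℝ) * (c μ m * y ^ m) := by
    unfold E
    rw [← tsum_mul_left, ← (h1.mul_left μ).tsum_add h3]
    refine tsum_congr fun m => ?_
    rw [← c_down]; ring
  rw [this, e3]; ring

lemma E_zero (μ : ℝ) : E μ 0 = (Real.Gamma (μ + 1))⁻¹ := by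
  unfold E
  rw [tsum_eq_single 0]
  · simp [c]
  · intro m hm; simp [hm]

lemma bessel_eq (μ x : ℝ) (hx : 0 < x) :
    besselJ μ x = (x / 2) ^ μ * E μ ((x / 2) ^ 2) := by
  unfold besselJ E
  rw [← tsum_mul_left]
  refine tsum_congr fun m => ?_
  have h : 0 < x / 2 := by positivity
  rw [Real.rpow_add h, ← pow_mul]
  have : (x / 2) ^ (2 * (m : ℝ)) = (x / 2) ^ (2 * m) := by
    rw [← Real.rpow_natCast]; push_cast; rfl
  rw [this]
  unfold c
  ring

lemma gamma_pos (n : ℕ) : ∀ x : ℝ, -(2 * (n : ℝ)) < x → x < 1 - 2 * n → 0 < Real.Gamma x := by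
  induction n with
  | zero => intro x h1 h2; simp at h1; exact Real.Gamma_pos_of_pos h1
  | succ n ih =>
    intro x h1 h2
    push_cast at h1 h2
    have hn : (0 : ℝ) ≤ n := Nat.cast_nonneg n
    have h := ih (x + 1 + 1) (by linarith) (by linarith)
    rw [Real.Gamma_add_one (by linarith), Real.Gamma_add_one (by linarith)] at h
    have h3 : 0 < (x + 1) * x := by nlinarith
    rw [← mul_assoc] at h
    exact (pos_iff_pos_of_mul_pos h).1 h3

lemma cont_E (μ : ℝ) : Continuous (E μ) :=
  continuous_iff_continuousAt.2 fun y => (hasDeriv_E μ y).continuousAt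

lemma wronsk (p : ℝ) (y : ℝ) :
    E p y * E (-p - 1) y + y * E (p + 1) y * E (-p) y = E p 0 * E (-p - 1) 0 := by
  have hd : ∀ y, HasDerivAt
      (fun y => E p y * E (-p - 1) y + y * E (p + 1) y * E (-p) y) 0 y := by
    intro y
    have h := ((hasDeriv_E p y).mul (hasDeriv_E (-p - 1) y)).add
      (((hasDerivAt_id y).mul (hasDeriv_E (p + 1) y)).mul (hasDeriv_E (-p) y))
    refine h.congr_deriv ?_
    have c1 := contig (p + 1) y
    have c2 := contig (-p) y
    rw [add_sub_cancel_right] at c1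
    simp only [sub_add_cancel, id, Pi.mul_apply]
    rw [c2]
    linear_combination (-E (-p) y) * c1
  have := is_const_of_deriv_eq_zero (fun y => (hd y).differentiableAt) (fun y => (hd y).deriv) y 0
  simpa using this

lemma main (p L : ℝ) (hp : 0 < p) (hG : 0 < Real.Gamma (-p)) (hL : 0 < L)
    (hB : ∀ y, 0 < y → y ≤ L → E (-p) y ≠ 0) (a b : ℝ) (ha : 0 < a) (hab : a ≤ b) (hb : b ≤ L) :
    0 ≤ b ^ p * E p b * E (-p - 1) a + a ^ (p + 1) * E (p + 1) a * E (-p) b := by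
  have hB0 : E (-p) 0 < 0 := by
    rw [E_zero, Real.Gamma_add_one (by linarith)]
    exact inv_lt_zero.2 (by nlinarith)
  have hBneg : ∀ y, 0 ≤ y → y ≤ L → E (-p) y < 0 := by
    intro y h0 h1
    by_contra hcon
    push Not at hcon
    obtain ⟨z, hz, hz0⟩ := intermediate_value_Icc h0 (cont_E (-p)).continuousOn ⟨hB0.le, hcon⟩
    rcases eq_or_lt_of_le hz.1 with h | h
    · rw [← h] at hz0; linarith
    · exact hB z h (hz.2.trans h1) hz0
  have hA1 : 0 < E (-p - 1) 0 := by
    rw [E_zero, sub_add_cancel]; positivity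
  have hA0 : 0 < E p 0 := by
    rw [E_zero]; exact inv_pos.2 (Real.Gamma_pos_of_pos (by linarith))
  have hW := mul_pos hA0 hA1
  have hcp : ∀ q : ℝ, 0 < q → Continuous (fun y : ℝ => y ^ q) := fun q hq =>
    Real.continuous_rpow_const hq.le
  have hanti : AntitoneOn (fun y => y ^ p * E p y / E (-p) y) (Set.Icc 0 L) := by
    apply antitoneOn_of_hasDerivWithinAt_nonpos (convex_Icc 0 L)
      (f' := fun y => -(y ^ (p - 1) * (E p 0 * E (-p - 1) 0)) / (E (-p) y) ^ 2)
    · apply ContinuousOn.div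
      · exact ((hcp p hp).mul (cont_E p)).continuousOn
      · exact (cont_E _).continuousOn
      · intro y hy; exact (hBneg y hy.1 hy.2).ne
    · intro y hy
      rw [interior_Icc] at hy
      have hne := (hBneg y hy.1.le hy.2.le).ne
      have h := (((Real.hasDerivAt_rpow_const (p := p) (Or.inl hy.1.ne')).mul (hasDeriv_E p y)).div
        (hasDeriv_E (-p) y) hne)
      refine (h.congr_deriv ?_).hasDerivWithinAt
      have c2 := contig (-p) y
      have hw := wronsk p y
      have hyp : y ^ p = y ^ (p - 1) * y := by
        rw [Real.rpow_sub_one hy.1.ne']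
        have := hy.1.ne'
        field_simp
      simp only [Pi.mul_apply]
      rw [← hw, c2, hyp]
      congr 1
      ring
    · intro y hy
      rw [interior_Icc] at hy
      have : 0 ≤ y ^ (p - 1) := Real.rpow_nonneg hy.1.le _
      apply div_nonpos_of_nonpos_of_nonneg _ (sq_nonneg _)
      have := mul_nonneg this hW.le
      linarith
  have hb0 : 0 < b := ha.trans_le hab
  have hBb := hBneg b hb0.le hb
  have hAb : 0 ≤ b ^ p * E p b := by
    have h := hanti ⟨le_rfl, hL.le⟩ ⟨hb0.le, hb⟩ hb0.le
    simp only [Real.zero_rpow hp.ne', zero_mul, zero_div] at h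
    by_contra hcon
    push Not at hcon
    have := div_pos_of_neg_of_neg hcon hBb
    linarith
  have hmono : MonotoneOn (fun y => b ^ p * E p b * E (-p - 1) y + y ^ (p + 1) * E (p + 1) y * E (-p) b)
      (Set.Icc 0 b) := by
    apply monotoneOn_of_hasDerivWithinAt_nonneg (convex_Icc 0 b)
      (f' := fun y => -(b ^ p * E p b * E (-p) y) + y ^ p * E p y * E (-p) b)
    · apply Continuous.continuousOn
      exact (continuous_const.mul (cont_E _)).add
        (((hcp (p + 1) (by linarith)).mul (cont_E _)).mul continuous_const)
    · intro y hy
      rw [interior_Icc] at hy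
      have h := ((hasDeriv_E (-p - 1) y).const_mul (b ^ p * E p b)).add
        (((Real.hasDerivAt_rpow_const (p := p + 1) (Or.inl hy.1.ne')).mul
          (hasDeriv_E (p + 1) y)).mul_const (E (-p) b))
      refine (h.congr_deriv ?_).hasDerivWithinAt
      have c1 := contig (p + 1) y
      rw [add_sub_cancel_right] at c1
      rw [sub_add_cancel, add_sub_cancel_right, c1, Real.rpow_add_one hy.1.ne']
      ring
    · intro y hy
      rw [interior_Icc] at hy
      have hBy := hBneg y hy.1.le (hy.2.le.trans hb)
      have h := hanti ⟨hy.1.le, hy.2.le.trans hb⟩ ⟨hb0.le, hb⟩ hy.2.le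
      have h2 := mul_le_mul_of_nonneg_right h (mul_pos_of_neg_of_neg hBy hBb).le
      have hn1 := hBy.ne
      have hn2 := hBb.ne
      have e1 : b ^ p * E p b / E (-p) b * (E (-p) y * E (-p) b) = b ^ p * E p b * E (-p) y := by
        field_simp
      have e2 : y ^ p * E p y / E (-p) y * (E (-p) y * E (-p) b) = y ^ p * E p y * E (-p) b := by
        field_simp
      simp only [e1, e2] at h2
      linarith
  have h := hmono ⟨le_rfl, hb0.le⟩ ⟨ha.le, hab⟩ ha.le
  simp only [Real.zero_rpow (by linarith : p + 1 ≠ 0), zero_mul, add_zero] at h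
  exact (mul_nonneg hAb hA1.le).trans h

end BesselAux

open BesselAux in
/-- **Key inequality for Lemma 3.2.** For `α ∈ (4n−1, 4n+1)`, `ν = (1−α)/2` and
`0 < λ < j²_{ν,1}`, one has
`J_{−ν}(s₀√λ)·J_{ν−1}(r√λ) + J_ν(s₀√λ)·J_{1−ν}(r√λ) ≥ 0` for `0 < r ≤ s₀ ≤ 1`. -/
theorem besselJ_derivative_combination_nonneg (n : ℕ) (hn : 1 ≤ n) (α lam ν : ℝ)
    (hα1 : 4 * (n : ℝ) - 1 < α) (hα2 : α < 4 * (n : ℝ) + 1)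
    (hν : ν = (1 - α) / 2)
    (hlam : 0 < lam)
    (hzero : ∀ t : ℝ, 0 < t → t ≤ Real.sqrt lam → besselJ ν t ≠ 0) :
    ∀ r s₀ : ℝ, 0 < r → r ≤ s₀ → s₀ ≤ 1 →
      0 ≤ besselJ (-ν) (s₀ * Real.sqrt lam) * besselJ (ν - 1) (r * Real.sqrt lam)
        + besselJ ν (s₀ * Real.sqrt lam) * besselJ (1 - ν) (r * Real.sqrt lam) := by
  intro r s hr hrs hs
  have hsq : 0 < Real.sqrt lam := Real.sqrt_pos.2 hlam
  set T := Real.sqrt lam with hT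
  have hs0 : 0 < s := hr.trans_le hrs
  have hn' : (1 : ℝ) ≤ n := by exact_mod_cast hn
  have hrT : 0 < r * T := by positivity
  have hsT : 0 < s * T := by positivity
  obtain ⟨p, rfl⟩ : ∃ p, ν = -p := ⟨-ν, by ring⟩
  have hp : 0 < p := by linarith
  have hG : 0 < Real.Gamma (-p) := gamma_pos n _ (by linarith) (by linarith)
  set u := r * T / 2 with hu
  set v := s * T / 2 with hv
  have hu0 : 0 < u := by positivity
  have hv0 : 0 < v := by positivity
  have huv : u ≤ v := by rw [hu, hv]; gcongr
  have hvT : v ≤ T / 2 := by rw [hv]; nlinarith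
  have hm := main p ((T / 2) ^ 2) hp hG (by positivity) (by
    intro y hy hyL h0
    have hsy : 0 < Real.sqrt y := Real.sqrt_pos.2 hy
    refine hzero (2 * Real.sqrt y) (by positivity) ?_ ?_
    · have h3 : Real.sqrt y ≤ T / 2 := (Real.sqrt_le_left (by positivity)).2 hyL
      linarith
    · rw [bessel_eq _ _ (by positivity)]
      have : (2 * Real.sqrt y / 2) ^ 2 = y := by
        rw [mul_div_cancel_left₀ _ (two_ne_zero), Real.sq_sqrt hy.le]
      rw [this, h0, mul_zero]) (u ^ 2) (v ^ 2) (by positivity) (by gcongr) (by gcongr)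
  rw [bessel_eq _ _ hsT, bessel_eq _ _ hrT, bessel_eq _ _ hsT, bessel_eq _ _ hrT]
  rw [← hu, ← hv, neg_neg, show 1 - -p = p + 1 by ring]
  have hvp : (v ^ 2) ^ p = v ^ p * v ^ p := by
    rw [pow_two, Real.mul_rpow hv0.le hv0.le]
  have hup : (u ^ 2) ^ (p + 1) = u ^ (p + 1) * u ^ (p + 1) := by
    rw [pow_two, Real.mul_rpow hu0.le hu0.le]
  rw [hvp, hup] at hm
  have hV : 0 < v ^ p := Real.rpow_pos_of_pos hv0 _
  have hU : 0 < u ^ (p + 1) := Real.rpow_pos_of_pos hu0 _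
  rw [show -p - 1 = -(p + 1) by ring] at hm ⊢
  rw [Real.rpow_neg hv0.le, Real.rpow_neg hu0.le]
  refine (div_nonneg hm (mul_pos hV hU).le).trans_eq ?_
  field_simp
end

section
/- Let α ≥ 1, set ν = (1−α)/2, let λ < 0, let 0 < η < 1, and suppose (H_0') holds: δ > 0, K_ν(√|λ|) − δ·η^ν·K_ν(η·√|λ|) ≤ 0, and I_{−ν}(√|λ|) − δ·η^ν·I_{−ν}(η·√|λ|) > 0. Then the Green's function G satisfies G(x,t) ≤ 0 for all x ∈ [0,1] and t ∈ (0,1]. -/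
/-- The modified Bessel function of the first kind of real order `μ`. -/
noncomputable def besselI (μ x : ℝ) : ℝ :=
  ∑' m : ℕ, (1 / ((m.factorial : ℝ) * Real.Gamma ((m : ℝ) + μ + 1))) *
    (x / 2) ^ (2 * (m : ℝ) + μ)

/-- The modified Bessel function of the second kind of real order `μ`,
`K_μ(x) = ∫_0^∞ e^{−x·cosh t}·cosh(μt) dt`. -/
noncomputable def besselK (μ x : ℝ) : ℝ :=
  ∫ t in Set.Ioi (0 : ℝ), Real.exp (-(x * Real.cosh t)) * Real.cosh (μ * t)

/-- The Green's function for the three-point singular BVP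
`−(x^α y')' − λ x^α y = 0`, `y'(0) = 0`, `y(1) = δ·y(η)` with `λ < 0` and
`ν = (1−α)/2`, expressed through modified Bessel functions. -/
noncomputable def greenIK (ν lam δ η x t : ℝ) : ℝ :=
  let m := Real.sqrt |lam|
  let D := besselI (-ν) m - δ * η ^ ν * besselI (-ν) (η * m)
  if t ≤ η then
    if x ≤ t then
      t ^ ν * x ^ ν * besselI (-ν) (x * m) *
        (besselI (-ν) (t * m) * (besselK ν m - δ * η ^ ν * besselK ν (η * m))
          - besselK ν (t * m) * D) / D
    else
      t ^ ν * x ^ ν * besselI (-ν) (t * m) *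
        (besselI (-ν) (x * m) * (besselK ν m - δ * η ^ ν * besselK ν (η * m))
          - besselK ν (x * m) * D) / D
  else
    if x ≤ t then
      t ^ ν * x ^ ν * besselI (-ν) (x * m) *
        (besselK ν m * besselI (-ν) (t * m) - besselI (-ν) m * besselK ν (t * m)) / D
    else
      t ^ ν * x ^ ν *
        (besselI (-ν) (x * m) * (besselK ν m * besselI (-ν) (t * m)
            - δ * η ^ ν * besselI (-ν) (η * m) * besselK ν (t * m))
          - besselI (-ν) (t * m) * besselK ν (x * m) * D) / D

theorem aux_gamma_ge (p : ℝ) (hp : 0 ≤ p) (m : ℕ) :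
    Real.Gamma (p + 1) ≤ Real.Gamma ((m : ℝ) + p + 1) := by
  induction m with
  | zero => simp
  | succ k ih =>
    have hk : (0 : ℝ) ≤ k := Nat.cast_nonneg k
    have h1 : ((k + 1 : ℕ) : ℝ) + p + 1 = ((k : ℝ) + p + 1) + 1 := by push_cast; ring
    rw [h1, Real.Gamma_add_one (s := (k : ℝ) + p + 1) (by positivity)]
    have : 0 < Real.Gamma ((k : ℝ) + p + 1) := Real.Gamma_pos_of_pos (by positivity)
    nlinarith [mul_nonneg (add_nonneg hk hp) this.le]

theorem aux_I_term_nonneg (p x : ℝ) (hp : 0 ≤ p) (hx : 0 ≤ x) (m : ℕ) :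
    0 ≤ (1 / ((m.factorial : ℝ) * Real.Gamma ((m : ℝ) + p + 1))) *
      (x / 2) ^ (2 * (m : ℝ) + p) := by
  have : 0 < Real.Gamma ((m : ℝ) + p + 1) := Real.Gamma_pos_of_pos (by positivity)
  positivity

theorem aux_I_nonneg (p x : ℝ) (hp : 0 ≤ p) (hx : 0 ≤ x) : 0 ≤ besselI p x :=
  tsum_nonneg (aux_I_term_nonneg p x hp hx)

theorem aux_I_summable (p x : ℝ) (hp : 0 ≤ p) (hx : 0 < x) :
    Summable fun m : ℕ => (1 / ((m.factorial : ℝ) * Real.Gamma ((m : ℝ) + p + 1))) *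
      (x / 2) ^ (2 * (m : ℝ) + p) := by
  have hs := (Real.summable_pow_div_factorial ((x / 2) ^ 2)).mul_left
    ((1 / Real.Gamma (p + 1)) * (x / 2) ^ p)
  refine Summable.of_nonneg_of_le (aux_I_term_nonneg p x hp hx.le) (fun m => ?_) hs
  have h0 : 0 < Real.Gamma (p + 1) := Real.Gamma_pos_of_pos (by positivity)
  have h1 := aux_gamma_ge p hp m
  have h2 : (x / 2) ^ (2 * (m : ℝ) + p) = ((x / 2) ^ 2) ^ m * (x / 2) ^ p := by
    rw [Real.rpow_add (by positivity), ← pow_mul, ← Real.rpow_natCast (x / 2) (2 * m)]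
    push_cast
    rfl
  rw [h2]
  have hf : (0 : ℝ) < m.factorial := by positivity
  calc _ ≤ (1 / ((m.factorial : ℝ) * Real.Gamma (p + 1))) *
        (((x / 2) ^ 2) ^ m * (x / 2) ^ p) := by gcongr
    _ = _ := by field_simp

theorem aux_I_mono (p x y : ℝ) (hp : 0 ≤ p) (hx : 0 < x) (hxy : x ≤ y) :
    besselI p x ≤ besselI p y := by
  refine Summable.tsum_le_tsum (fun m => ?_) (aux_I_summable p x hp hx)
    (aux_I_summable p y hp (hx.trans_le hxy))
  have : 0 < Real.Gamma ((m : ℝ) + p + 1) := Real.Gamma_pos_of_pos (by positivity)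
  gcongr

theorem aux_K_nonneg (ν x : ℝ) : 0 ≤ besselK ν x :=
  MeasureTheory.integral_nonneg fun t => by
    have := Real.cosh_pos (ν * t)
    positivity

theorem aux_K_int (ν x : ℝ) (hx : 0 < x) :
    MeasureTheory.Integrable
      (fun t => Real.exp (-(x * Real.cosh t)) * Real.cosh (ν * t)) := by
  have hg := (integrable_exp_neg_mul_sq (b := x / 4) (by positivity)).const_mul
    (Real.exp (ν ^ 2 / x))
  refine hg.mono' (by fun_prop) (Filter.Eventually.of_forall fun t => ?_)
  have hc := Real.cosh_pos (ν * t)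
  rw [Real.norm_of_nonneg (by positivity)]
  have h1 : 1 + t ^ 2 / 2 ≤ Real.cosh t := by
    have := Real.cosh_sq (t / 2)
    have h2 : Real.cosh t = 2 * Real.sinh (t / 2) ^ 2 + 1 := by
      have := Real.cosh_two_mul (t / 2)
      rw [show 2 * (t / 2) = t by ring] at this
      linarith
    have h3 : (t / 2) ^ 2 ≤ Real.sinh (t / 2) ^ 2 := by
      rw [sq_le_sq, Real.abs_sinh]
      exact Real.self_le_sinh_iff.2 (abs_nonneg _)
    nlinarith
  have h4 : Real.cosh (ν * t) ≤ Real.exp |ν * t| := by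
    rw [← Real.cosh_abs, Real.cosh_eq]
    have : Real.exp (-|ν * t|) ≤ Real.exp |ν * t| :=
      Real.exp_le_exp.2 (by linarith [abs_nonneg (ν * t)])
    linarith
  calc _ ≤ Real.exp (-(x * (1 + t ^ 2 / 2))) * Real.exp |ν * t| := by gcongr
    _ = Real.exp (-(x * (1 + t ^ 2 / 2)) + |ν * t|) := (Real.exp_add _ _).symm
    _ ≤ Real.exp (ν ^ 2 / x + -(x / 4) * t ^ 2) := by
      apply Real.exp_le_exp.2
      have h5 : |ν * t| ≤ ν ^ 2 / x + x / 4 * t ^ 2 := by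
        rw [abs_mul, ← sq_abs ν, ← sq_abs t]
        have : |ν| ^ 2 / x + x / 4 * |t| ^ 2 - |ν| * |t| = (|ν| - x / 2 * |t|) ^ 2 / x := by
          field_simp
          ring
        have h6 : 0 ≤ (|ν| - x / 2 * |t|) ^ 2 / x := by positivity
        linarith
      nlinarith
    _ = _ := Real.exp_add _ _

theorem aux_K_anti (ν x y : ℝ) (hx : 0 < x) (hxy : x ≤ y) :
    besselK ν y ≤ besselK ν x := by
  refine MeasureTheory.integral_mono (aux_K_int ν y (hx.trans_le hxy)).integrableOn
    (aux_K_int ν x hx).integrableOn (fun t => ?_)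
  have := Real.cosh_pos (ν * t)
  have := Real.cosh_pos t
  dsimp only
  gcongr

/-- **Lemma 3.7, sign of the Green's function under (H₀').**
For `α ≥ 1`, `ν = (1−α)/2`, `λ < 0`, `0 < η < 1` and hypothesis `(H₀')`
(`δ > 0`, `K_ν(√|λ|) − δη^ν K_ν(η√|λ|) ≤ 0`,
`I_{−ν}(√|λ|) − δη^ν I_{−ν}(η√|λ|) > 0`), the Green's function satisfies
`G(x,t) ≤ 0` on `[0,1] × (0,1]`. -/
theorem greenIK_nonpos (α lam δ η ν : ℝ) (hα : 1 ≤ α)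
    (hν : ν = (1 - α) / 2) (hlam : lam < 0)
    (hη0 : 0 < η) (hη1 : η < 1) (hδ : 0 < δ)
    (hH1 : besselK ν (Real.sqrt |lam|)
        - δ * η ^ ν * besselK ν (η * Real.sqrt |lam|) ≤ 0)
    (hH2 : 0 < besselI (-ν) (Real.sqrt |lam|)
        - δ * η ^ ν * besselI (-ν) (η * Real.sqrt |lam|)) :
    ∀ x ∈ Set.Icc (0 : ℝ) 1, ∀ t ∈ Set.Ioc (0 : ℝ) 1, greenIK ν lam δ η x t ≤ 0 := by
  intro x hx t ht
  obtain ⟨hx0, hx1⟩ := hx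
  obtain ⟨ht0, ht1⟩ := ht
  have hp : 0 ≤ -ν := by rw [hν]; linarith
  have hm : 0 < Real.sqrt |lam| := Real.sqrt_pos.2 (abs_pos.2 hlam.ne)
  unfold greenIK
  dsimp only
  generalize Real.sqrt |lam| = m at *
  have hI : ∀ y, 0 ≤ y → 0 ≤ besselI (-ν) (y * m) := fun y hy =>
    aux_I_nonneg _ _ hp (by positivity)
  have hI1 : 0 ≤ besselI (-ν) m := aux_I_nonneg _ _ hp hm.le
  have hK : ∀ y, 0 ≤ besselK ν y := aux_K_nonneg ν
  have hIm : ∀ y z, 0 < y → y ≤ z → besselI (-ν) (y * m) ≤ besselI (-ν) (z * m) :=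
    fun y z hy hz => aux_I_mono _ _ _ hp (by positivity) (by gcongr)
  have hKm : ∀ y z, 0 < y → y ≤ z → besselK ν (z * m) ≤ besselK ν (y * m) :=
    fun y z hy hz => aux_K_anti _ _ _ (by positivity) (by gcongr)
  have hIm1 : ∀ y, 0 < y → y ≤ 1 → besselI (-ν) (y * m) ≤ besselI (-ν) m :=
    fun y hy hz => by simpa using hIm y 1 hy hz
  have hKm1 : ∀ y, 0 < y → y ≤ 1 → besselK ν m ≤ besselK ν (y * m) :=
    fun y hy hz => by simpa using hKm y 1 hy hz
  have htx : 0 ≤ t ^ ν * x ^ ν := by positivity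
  split_ifs with h1 h2 h2
  · refine div_nonpos_of_nonpos_of_nonneg (mul_nonpos_of_nonneg_of_nonpos
      (mul_nonneg htx (hI x hx0)) ?_) hH2.le
    have a := mul_nonpos_of_nonneg_of_nonpos (hI t ht0.le) hH1
    have b := mul_nonneg (hK (t * m)) hH2.le
    linarith
  · refine div_nonpos_of_nonpos_of_nonneg (mul_nonpos_of_nonneg_of_nonpos
      (mul_nonneg htx (hI t ht0.le)) ?_) hH2.le
    have a := mul_nonpos_of_nonneg_of_nonpos (hI x hx0) hH1
    have b := mul_nonneg (hK (x * m)) hH2.le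
    linarith
  · refine div_nonpos_of_nonpos_of_nonneg (mul_nonpos_of_nonneg_of_nonpos
      (mul_nonneg htx (hI x hx0)) ?_) hH2.le
    have a := mul_le_mul (hKm1 t ht0 ht1) (hIm1 t ht0 ht1) (hI t ht0.le) (hK (t * m))
    linarith
  · refine div_nonpos_of_nonpos_of_nonneg (mul_nonpos_of_nonneg_of_nonpos htx ?_) hH2.le
    push Not at h2
    have hxp : 0 < x := ht0.trans h2
    have a := mul_le_mul (hKm1 x hxp hx1) (hIm1 x hxp hx1) (hI x hx0) (hK (x * m))
    have b := mul_le_mul (hKm t x ht0 h2.le) (hIm t x ht0 h2.le) (hI t ht0.le) (hK (t * m))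
    have c : 0 ≤ δ * η ^ ν * besselI (-ν) (η * m) :=
      mul_nonneg (by positivity) (hI η hη0.le)
    have a' := mul_le_mul_of_nonneg_left a (hI t ht0.le)
    have b' := mul_le_mul_of_nonneg_left b c
    linarith
end

section
/- (Maximum principle, positive λ.) Let n ≥ 1 be a natural number, let α ∈ (4n−3, 4n−1), set ν = (1−α)/2, let 0 < η < 1, and suppose (H_0) holds: 0 < λ < j_{ν,1}², 0 < δ < 1, δ·η^ν·J_ν(η·√λ) − J_ν(√λ) ≥ 0, and J_{−ν}(√λ) − δ·η^ν·J_{−ν}(η·√λ) > 0. If y : [0,1] → ℝ is continuous on [0,1], continuously differentiable on [0,1], twice differentiable on (0,1), and satisfies −(x^α·y'(x))' − λ·x^α·y(x) ≥ 0 for all x ∈ (0,1), y'(0) = 0, and y(1) ≥ δ·y(η), then y(x) ≥ 0 for all x ∈ [0,1]. -/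
noncomputable def cc (a : ℝ) (m : ℕ) : ℝ :=
  (-1 : ℝ) ^ m / ((m.factorial : ℝ) * Real.Gamma ((m : ℝ) + a + 1))

noncomputable def EE (a z : ℝ) : ℝ := ∑' m : ℕ, cc a m * z ^ m

lemma cc_succ (a : ℝ) (m : ℕ) : cc a (m + 1) * ((m : ℝ) + 1) = -cc (a + 1) m := by
  unfold cc
  have h : (((m + 1 : ℕ) : ℝ) + a + 1) = (m : ℝ) + (a + 1) + 1 := by push_cast; ring
  rw [h, Nat.factorial_succ]
  have h1 : (m.factorial : ℝ) ≠ 0 := by positivity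
  have h2 : (m : ℝ) + 1 ≠ 0 := by positivity
  push_cast
  by_cases hG : Real.Gamma ((m : ℝ) + (a + 1) + 1) = 0
  · simp [hG]
  · field_simp
    ring

lemma cc_gamma (a : ℝ) (m : ℕ) (h : (m : ℝ) + a + 1 ≠ 0) :
    ((m : ℝ) + a + 1) * cc (a + 1) m = cc a m := by
  unfold cc
  have h' : (m : ℝ) + (a + 1) + 1 = ((m : ℝ) + a + 1) + 1 := by ring
  rw [h', Real.Gamma_add_one h]
  have h1 : (m.factorial : ℝ) ≠ 0 := by positivity
  by_cases hG : Real.Gamma ((m : ℝ) + a + 1) = 0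
  · simp [hG]
  · field_simp

lemma cc_summable (a z : ℝ) : Summable (fun m : ℕ => cc a m * z ^ m) := by
  apply summable_of_ratio_norm_eventually_le (r := 1 / 2) (by norm_num)
  filter_upwards [Filter.eventually_ge_atTop (⌈2 * |z|⌉₊ + ⌈|a|⌉₊)] with m hm
  have hm' : ((⌈2 * |z|⌉₊ : ℝ) + (⌈|a|⌉₊ : ℝ)) ≤ m := by exact_mod_cast hm
  have h1 := Nat.le_ceil (2 * |z|)
  have h2 := Nat.le_ceil (|a|)
  have h3 := neg_abs_le a
  have h4 := abs_nonneg z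
  have h5 := abs_nonneg a
  have hp : 1 ≤ (m : ℝ) + a + 1 := by linarith
  have e1 := cc_succ a m
  have e2 := cc_gamma a m (by linarith)
  have e3 : cc a m = -(((m : ℝ) + a + 1) * (((m : ℝ) + 1) * cc a (m + 1))) := by
    rw [← e2]; linear_combination (m + a + 1 : ℝ) * e1
  rw [e3, norm_mul, norm_mul, norm_neg, norm_mul, norm_mul, pow_succ, norm_mul]
  simp only [Real.norm_eq_abs]
  rw [abs_of_nonneg (by linarith : 0 ≤ (m : ℝ) + a + 1), abs_of_nonneg (by linarith : 0 ≤ (m : ℝ) + 1)]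
  have hc : 0 ≤ |cc a (m + 1)| * |z ^ m| := by positivity
  have : |z| ≤ 1 / 2 * (((m : ℝ) + a + 1) * (m + 1)) := by nlinarith
  nlinarith [mul_le_mul_of_nonneg_left this hc]

lemma EE_hasDerivAt (a z : ℝ) : HasDerivAt (EE a) (-EE (a + 1) z) z := by
  have hR : z ∈ Metric.ball (0 : ℝ) (|z| + 1) := by simp
  have hsum : Summable (fun m : ℕ => |cc a m * ((m : ℝ) * (|z| + 1) ^ (m - 1))|) := by
    rw [← summable_nat_add_iff 1]
    have := (cc_summable (a + 1) (|z| + 1)).abs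
    refine this.congr (fun m => ?_)
    have e := cc_succ a m
    simp only [Nat.add_sub_cancel]
    rw [← abs_neg, ← neg_mul, ← e]
    push_cast
    ring_nf
  have key := hasDerivAt_tsum_of_isPreconnected (𝕜 := ℝ) (F := ℝ)
    (g := fun (m : ℕ) (w : ℝ) => cc a m * w ^ m)
    (g' := fun (m : ℕ) (w : ℝ) => cc a m * ((m : ℝ) * w ^ (m - 1))) (y₀ := z) (y := z)
    hsum Metric.isOpen_ball (convex_ball (0 : ℝ) (|z| + 1)).isPreconnected
    (fun m w _ => (hasDerivAt_pow m w).const_mul (cc a m))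
    (fun m w hw => by
      have hw' : |w| ≤ |z| + 1 := by
        have := Metric.mem_ball.mp hw
        rw [dist_zero_right, Real.norm_eq_abs] at this
        exact this.le
      rw [Real.norm_eq_abs, abs_mul, abs_mul, abs_mul, abs_mul, abs_pow, abs_pow,
        abs_of_nonneg (by positivity : 0 ≤ |z| + 1)]
      gcongr)
    hR (cc_summable a z) hR
  have hs : Summable (fun m : ℕ => cc a m * ((m : ℝ) * z ^ (m - 1))) := by
    rw [← summable_nat_add_iff 1]
    refine (cc_summable (a + 1) z).neg.congr (fun m => ?_)
    have e := cc_succ a m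
    simp only [Nat.add_sub_cancel]
    rw [← neg_mul, ← e]
    push_cast
    ring
  have e : ∑' m : ℕ, cc a m * ((m : ℝ) * z ^ (m - 1)) = -EE (a + 1) z := by
    rw [hs.tsum_eq_zero_add]
    unfold EE
    rw [← tsum_neg]
    simp only [Nat.cast_zero, zero_mul, mul_zero, zero_add]
    refine tsum_congr (fun m => ?_)
    have e := cc_succ a m
    simp only [Nat.add_sub_cancel]
    rw [← neg_mul, ← e]
    push_cast
    ring
  rw [← e]
  exact key

lemma EE_rec (a z : ℝ) (h : ∀ m : ℕ, (m : ℝ) + a + 1 ≠ 0) :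
    z * EE (a + 1 + 1) z - (a + 1) * EE (a + 1) z + EE a z = 0 := by
  have h1 : HasSum (fun m : ℕ => (m : ℝ) * cc (a + 1) m * z ^ m) (-(z * EE (a + 1 + 1) z)) := by
    rw [← hasSum_nat_add_iff' 1]
    have := ((cc_summable (a + 1 + 1) z).hasSum.mul_left z).neg
    simp only [Finset.sum_range_one, Nat.cast_zero, zero_mul, sub_zero]
    refine this.congr_fun ?_ 
    intro m
    have e := cc_succ (a + 1) m
    push_cast
    linear_combination (z ^ (m + 1)) * e
  have h2 := (cc_summable (a + 1) z).hasSum.mul_left (a + 1)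
  have h3 := h1.add h2
  have h4 : HasSum (fun m : ℕ => cc a m * z ^ m) (EE a z) := (cc_summable a z).hasSum
  have h5 : (fun m : ℕ => (m : ℝ) * cc (a + 1) m * z ^ m + (a + 1) * (cc (a + 1) m * z ^ m))
      = fun m : ℕ => cc a m * z ^ m := by
    funext m
    rw [← cc_gamma a m (h m)]; ring
  rw [h5] at h3
  have := h3.unique h4
  change _ + (a + 1) * EE (a + 1) z = _ at this
  linarith

lemma EE_zero (a : ℝ) : EE a 0 = 1 / Real.Gamma (a + 1) := by
  unfold EE
  rw [tsum_eq_single 0]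
  · simp [cc]
  · intro m hm; simp [hm]

lemma besselJ_eq_s14 (a t : ℝ) (ht : 0 < t) : besselJ a t = (t / 2) ^ a * EE a (t ^ 2 / 4) := by
  unfold besselJ EE
  rw [← tsum_mul_left]
  refine tsum_congr (fun m => ?_)
  have h : (0 : ℝ) < t / 2 := by positivity
  rw [Real.rpow_add h, Real.rpow_mul h.le, Real.rpow_natCast]
  have : (t / 2) ^ (2 : ℝ) = t ^ 2 / 4 := by
    rw [Real.rpow_two]; ring
  rw [this]
  unfold cc
  ring

lemma EE_cont (a : ℝ) : Continuous (EE a) :=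
  continuous_iff_continuousAt.mpr fun z => (EE_hasDerivAt a z).continuousAt

/-- positivity of the regular solution -/
lemma EE_pos (μ Z : ℝ) (hμ : 0 < μ) (hint : ∀ m : ℕ, (m : ℝ) + (-μ) + 1 ≠ 0)
    (hB : ∀ z ∈ Set.Icc 0 Z, EE (-μ) z ≠ 0) (z : ℝ) (hz : z ∈ Set.Icc 0 Z) : 0 < EE μ z := by
  have hA0 : 0 < EE μ 0 := by
    rw [EE_zero]; exact one_div_pos.mpr (Real.Gamma_pos_of_pos (by linarith))
  rcases hz.1.eq_or_lt with h0 | h0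
  · rw [← h0]; exact hA0
  have hZ : 0 ≤ Z := h0.le.trans hz.2
  have hB0 := hB 0 ⟨le_rfl, hZ⟩
  have hBpos : ∀ w ∈ Set.Icc 0 Z, 0 < EE (-μ) w * EE (-μ) 0 := by
    intro w hw
    by_contra hneg
    push Not at hneg
    have hc : ContinuousOn (fun w => EE (-μ) w * EE (-μ) 0) (Set.Icc 0 w) :=
      ((EE_cont _).mul continuous_const).continuousOn
    have := intermediate_value_Icc' hw.1 hc
    obtain ⟨v, hv, hv0⟩ := this ⟨hneg, mul_self_nonneg _⟩
    rcases mul_eq_zero.mp hv0 with h | h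
    · exact hB v ⟨hv.1, hv.2.trans hw.2⟩ h
    · exact hB0 h
  -- Wronskian
  let F : ℝ → ℝ := fun z => z * ((-EE (μ + 1) z) * EE (-μ) z - EE μ z * (-EE (-μ + 1) z))
    + μ * (EE μ z * EE (-μ) z)
  have hF : ∀ z, HasDerivAt F 0 z := by
    intro z
    have a0 := EE_hasDerivAt μ z
    have a1 := EE_hasDerivAt (μ + 1) z
    have b0 := EE_hasDerivAt (-μ) z
    have b1 := EE_hasDerivAt (-μ + 1) z
    have ra := EE_rec μ z (fun m => by positivity)
    have rb := EE_rec (-μ) z hint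
    have := ((hasDerivAt_id z).mul ((a1.neg.mul b0).sub (a0.mul b1.neg))).add
      ((a0.mul b0).const_mul μ)
    refine this.congr_deriv ?_
    simp only [id, Pi.neg_apply, Pi.mul_apply, Pi.sub_apply]
    linear_combination EE (-μ) z * ra - EE μ z * rb
  have hFc : ∀ z, F z = μ * (EE μ 0 * EE (-μ) 0) := by
    intro z
    have := is_const_of_deriv_eq_zero (fun z => (hF z).differentiableAt) (fun z => (hF z).deriv) z 0
    rw [this]; simp [F]
  let Q : ℝ → ℝ := fun z => z ^ μ * EE μ z / (EE (-μ) z) * EE (-μ) 0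
  have hQ : StrictMonoOn Q (Set.Icc 0 Z) := by
    apply strictMonoOn_of_deriv_pos (convex_Icc 0 Z)
    · refine ContinuousOn.mul (ContinuousOn.div ?_ (EE_cont _).continuousOn hB) continuousOn_const
      exact ((Real.continuous_rpow_const hμ.le).mul (EE_cont _)).continuousOn
    · intro w hw
      rw [interior_Icc] at hw
      have hb := hB w ⟨hw.1.le, hw.2.le⟩
      have d := ((((Real.hasDerivAt_rpow_const (p := μ) (Or.inl hw.1.ne')).mul
        (EE_hasDerivAt μ w)).div (EE_hasDerivAt (-μ) w) hb).mul_const (EE (-μ) 0))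
      have hw0 : w ≠ 0 := hw.1.ne'
      have e : w ^ μ = w ^ (μ - 1) * w := by
        rw [Real.rpow_sub_one hw0]; field_simp
      have : deriv Q w = w ^ (μ - 1) * F w * EE (-μ) 0 / EE (-μ) w ^ 2 := by
        refine d.deriv.trans ?_
        simp only [F, Pi.mul_apply]
        rw [e]
        field_simp
        ring
      rw [this, hFc]
      have h1 : 0 < w ^ (μ - 1) := Real.rpow_pos_of_pos hw.1 _
      have h2 : 0 < EE (-μ) w ^ 2 := by positivity
      have h3 : 0 < EE (-μ) 0 ^ 2 := by positivity
      have : w ^ (μ - 1) * (μ * (EE μ 0 * EE (-μ) 0)) * EE (-μ) 0 / EE (-μ) w ^ 2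
        = w ^ (μ - 1) * (μ * EE μ 0) * EE (-μ) 0 ^ 2 / EE (-μ) w ^ 2 := by ring
      rw [this]
      positivity
  have := hQ ⟨le_rfl, hZ⟩ hz h0
  have hQ0 : Q 0 = 0 := by simp [Q, Real.zero_rpow hμ.ne']
  rw [hQ0] at this
  have hb := hB z hz
  have hbp := hBpos z hz
  have hb2 : 0 < EE (-μ) z ^ 2 := by positivity
  have e : Q z * EE (-μ) z ^ 2 = z ^ μ * (EE (-μ) z * EE (-μ) 0) * EE μ z := by
    simp only [Q]; field_simp
  have h1 : 0 < z ^ μ := Real.rpow_pos_of_pos h0 _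
  have h2 : 0 < z ^ μ * (EE (-μ) z * EE (-μ) 0) * EE μ z := by rw [← e]; positivity
  exact pos_of_mul_pos_right h2 (by positivity)

/-- **Maximum principle for positive `λ` (Proposition 4.2, (Max₁)).**
For `α ∈ (4n−3, 4n−1)`, `ν = (1−α)/2`, `0 < η < 1` and hypothesis `(H₀)`:
if `y ∈ C¹[0,1]` is twice differentiable on `(0,1)` and satisfies
`−(x^α y')' − λ x^α y ≥ 0` on `(0,1)`, `y'(0) = 0` and `y(1) ≥ δ·y(η)`,
then `y ≥ 0` on `[0,1]`. -/
theorem maximum_principle_pos_lambda (n : ℕ) (hn : 1 ≤ n) (α lam δ η ν : ℝ)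
    (hα1 : 4 * (n : ℝ) - 3 < α) (hα2 : α < 4 * (n : ℝ) - 1)
    (hν : ν = (1 - α) / 2)
    (hη0 : 0 < η) (hη1 : η < 1)
    (hlam : 0 < lam)
    (hzero : ∀ t : ℝ, 0 < t → t ≤ Real.sqrt lam → besselJ ν t ≠ 0)
    (hδ0 : 0 < δ) (hδ1 : δ < 1)
    (hH1 : 0 ≤ δ * η ^ ν * besselJ ν (η * Real.sqrt lam) - besselJ ν (Real.sqrt lam))
    (hH2 : 0 < besselJ (-ν) (Real.sqrt lam)
        - δ * η ^ ν * besselJ (-ν) (η * Real.sqrt lam))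
    (y : ℝ → ℝ)
    (hyc : ContinuousOn y (Set.Icc 0 1))
    (hy1 : ∀ x ∈ Set.Icc (0 : ℝ) 1, DifferentiableAt ℝ y x)
    (hy1c : ContinuousOn (deriv y) (Set.Icc 0 1))
    (hy2 : ∀ x ∈ Set.Ioo (0 : ℝ) 1, DifferentiableAt ℝ (deriv y) x)
    (hineq : ∀ x ∈ Set.Ioo (0 : ℝ) 1,
      0 ≤ -(α * x ^ (α - 1) * deriv y x + x ^ α * deriv (deriv y) x)
        - lam * x ^ α * y x)
    (hbc0 : deriv y 0 = 0) (hbc1 : δ * y η ≤ y 1) :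
    ∀ x ∈ Set.Icc (0 : ℝ) 1, 0 ≤ y x := by
  obtain ⟨μ, hμν⟩ : ∃ μ : ℝ, ν = -μ := ⟨-ν, by ring⟩
  have hn' : (1 : ℝ) ≤ n := by exact_mod_cast hn
  have hμα : μ = (α - 1) / 2 := by linarith
  have hα : 1 < α := by linarith
  have hμ : 0 < μ := by linarith
  have hs : 0 < Real.sqrt lam := Real.sqrt_pos.mpr hlam
  have hss : Real.sqrt lam ^ 2 = lam := Real.sq_sqrt hlam.le
  subst hμν
  rw [neg_neg] at hH2
  have hint : ∀ m : ℕ, (m : ℝ) + (-μ) + 1 ≠ 0 := by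
    intro m hm
    have h1 : (m : ℝ) + 1 < 2 * n - 1 := by linarith
    have h2 : 2 * (n : ℝ) - 2 < (m : ℝ) + 1 := by linarith
    have h1' : (m : ℤ) + 1 < 2 * n - 1 := by exact_mod_cast h1
    have h2' : 2 * (n : ℤ) - 2 < (m : ℤ) + 1 := by exact_mod_cast h2
    omega
  have hB : ∀ z ∈ Set.Icc 0 (lam / 4), EE (-μ) z ≠ 0 := by
    intro z hz
    rcases hz.1.eq_or_lt with h0 | h0
    · rw [← h0, EE_zero]
      apply one_div_ne_zero
      apply Real.Gamma_ne_zero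
      intro m hm
      exact hint m (by linarith)
    · have hsz : 0 < Real.sqrt z := Real.sqrt_pos.mpr h0
      have ht : 2 * Real.sqrt z ≤ Real.sqrt lam := by
        apply Real.le_sqrt_of_sq_le
        rw [mul_pow, Real.sq_sqrt h0.le]; linarith [hz.2]
      have := hzero (2 * Real.sqrt z) (by positivity) ht
      rw [besselJ_eq_s14 _ _ (by positivity), mul_pow, Real.sq_sqrt h0.le] at this
      have e : (2 : ℝ) ^ 2 * z / 4 = z := by ring
      rw [e] at this
      exact (mul_ne_zero_iff.mp this).2
  have hA := EE_pos μ (lam / 4) hμ hint hB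
  let φ : ℝ → ℝ := fun x => EE μ (lam / 4 * x ^ 2)
  let φ' : ℝ → ℝ := fun x => -EE (μ + 1) (lam / 4 * x ^ 2) * (lam / 2 * x)
  have hφpos : ∀ x ∈ Set.Icc (0 : ℝ) 1, 0 < φ x := by
    intro x hx
    have : x ^ 2 ≤ 1 := pow_le_one₀ hx.1 hx.2
    exact hA _ ⟨by positivity, by nlinarith⟩
  have hin : ∀ x : ℝ, HasDerivAt (fun x : ℝ => lam / 4 * x ^ 2) (lam / 2 * x) x := by
    intro x
    refine ((hasDerivAt_pow 2 x).const_mul (lam / 4)).congr_deriv ?_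
    norm_num; ring
  have hφ : ∀ x, HasDerivAt φ (φ' x) x := by
    intro x
    have h := HasDerivAt.comp (h₂ := EE μ) x (EE_hasDerivAt μ (lam / 4 * x ^ 2)) (hin x)
    exact h
  have hφ2 : ∀ x, ∃ d, HasDerivAt φ' d x ∧ x * d + α * φ' x + lam * x * φ x = 0 := by
    intro x
    have h1 := (HasDerivAt.comp (h₂ := EE (μ + 1)) x (EE_hasDerivAt (μ + 1) (lam / 4 * x ^ 2)) (hin x)).neg
    have h2 := h1.mul ((hasDerivAt_id x).const_mul (lam / 2))
    refine ⟨_, h2, ?_⟩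
    have r := EE_rec μ (lam / 4 * x ^ 2) (fun m => by positivity)
    have hα' : α = 2 * μ + 1 := by linarith
    simp only [φ, φ', id, Pi.neg_apply, Function.comp]
    rw [hα']
    linear_combination (lam * x) * r
  have hH2' : δ * φ η < φ 1 := by
    rw [besselJ_eq_s14 _ _ hs, besselJ_eq_s14 _ _ (mul_pos hη0 hs), mul_pow, hss] at hH2
    have e1 : (η * Real.sqrt lam / 2) ^ μ = η ^ μ * (Real.sqrt lam / 2) ^ μ := by
      rw [mul_div_assoc, Real.mul_rpow hη0.le (by positivity)]
    have e2 : η ^ (-μ) * η ^ μ = 1 := by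
      rw [← Real.rpow_add hη0]; simp
    rw [e1] at hH2
    have e3 : φ 1 = EE μ (lam / 4) := by simp [φ]
    have e4 : φ η = EE μ (η ^ 2 * lam / 4) := by simp only [φ]; congr 1; ring
    rw [e3, e4]
    have hp : 0 < (Real.sqrt lam / 2) ^ μ := Real.rpow_pos_of_pos (by positivity) _
    have : 0 < (Real.sqrt lam / 2) ^ μ * (EE μ (lam / 4) - δ * EE μ (η ^ 2 * lam / 4)) := by
      refine lt_of_lt_of_eq hH2 ?_
      linear_combination (-δ * (Real.sqrt lam / 2) ^ μ * EE μ (η ^ 2 * lam / 4)) * e2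
    have := pos_of_mul_pos_right this hp.le
    linarith
  have hφc : Continuous φ := continuous_iff_continuousAt.mpr fun x => (hφ x).continuousAt
  have hφ'c : Continuous φ' := continuous_iff_continuousAt.mpr fun x => by
    obtain ⟨d, hd, _⟩ := hφ2 x
    exact hd.continuousAt
  let w : ℝ → ℝ := fun x => x ^ α * (deriv y x * φ x - y x * φ' x)
  have hw : AntitoneOn w (Set.Icc 0 1) := by
    have hd : ∀ x ∈ Set.Ioo (0 : ℝ) 1, ∃ d ≤ 0, HasDerivAt w d x := by
      intro x hx
      obtain ⟨d, hd, hde⟩ := hφ2 x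
      have hx0 : x ≠ 0 := hx.1.ne'
      have hyx := (hy1 x ⟨hx.1.le, hx.2.le⟩).hasDerivAt
      have hyx2 := (hy2 x hx).hasDerivAt
      have D := (Real.hasDerivAt_rpow_const (p := α) (Or.inl hx0)).mul
        ((hyx2.mul (hφ x)).sub (hyx.mul hd))
      refine ⟨_, ?_, D⟩
      have e : x ^ α = x ^ (α - 1) * x := by
        rw [Real.rpow_sub_one hx0]; field_simp
      have hq := hineq x hx
      have hm := mul_nonneg hq (hφpos x ⟨hx.1.le, hx.2.le⟩).le
      simp only [Pi.mul_apply, Pi.sub_apply]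
      rw [e] at hm ⊢
      refine le_of_eq_of_le ?_ (neg_nonpos.mpr hm)
      linear_combination (-(y x) * x ^ (α - 1)) * hde
    apply antitoneOn_of_deriv_nonpos (convex_Icc 0 1)
    · refine (Real.continuous_rpow_const (by linarith)).continuousOn.mul ?_
      exact (hy1c.mul hφc.continuousOn).sub (hyc.mul hφ'c.continuousOn)
    · intro x hx
      rw [interior_Icc] at hx
      obtain ⟨d, _, h⟩ := hd x hx
      exact h.differentiableAt.differentiableWithinAt
    · intro x hx
      rw [interior_Icc] at hx
      obtain ⟨d, h0, h⟩ := hd x hx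
      rw [h.deriv]; exact h0
  have hq : AntitoneOn (fun x => y x / φ x) (Set.Icc 0 1) := by
    have hd : ∀ x ∈ Set.Ioo (0 : ℝ) 1, ∃ d ≤ 0, HasDerivAt (fun x => y x / φ x) d x := by
      intro x hx
      have hx' : x ∈ Set.Icc (0 : ℝ) 1 := ⟨hx.1.le, hx.2.le⟩
      have hp := hφpos x hx'
      refine ⟨_, ?_, (hy1 x hx').hasDerivAt.div (hφ x) hp.ne'⟩
      have h1 := hw (Set.left_mem_Icc.mpr zero_le_one) hx' hx.1.le
      have h0 : w 0 = 0 := by simp [w, Real.zero_rpow (by linarith : α ≠ 0)]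
      rw [h0] at h1
      have hxp : 0 < x ^ α := Real.rpow_pos_of_pos hx.1 _
      have h2 : deriv y x * φ x - y x * φ' x ≤ 0 := by
        by_contra hc
        push Not at hc
        have := mul_pos hxp hc
        simp only [w] at h1
        linarith
      exact div_nonpos_of_nonpos_of_nonneg h2 (by positivity)
    apply antitoneOn_of_deriv_nonpos (convex_Icc 0 1)
    · exact hyc.div hφc.continuousOn (fun x hx => (hφpos x hx).ne')
    · intro x hx
      rw [interior_Icc] at hx
      obtain ⟨d, _, h⟩ := hd x hx
      exact h.differentiableAt.differentiableWithinAt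
    · intro x hx
      rw [interior_Icc] at hx
      obtain ⟨d, h0, h⟩ := hd x hx
      rw [h.deriv]; exact h0
  have h1m : (1 : ℝ) ∈ Set.Icc (0 : ℝ) 1 := Set.right_mem_Icc.mpr zero_le_one
  have hηm : η ∈ Set.Icc (0 : ℝ) 1 := ⟨hη0.le, hη1.le⟩
  have hp1 := hφpos 1 h1m
  have hpη := hφpos η hηm
  have hy1n : 0 ≤ y 1 := by
    have h := hq hηm h1m hη1.le
    simp only at h
    rw [div_le_div_iff₀ hp1 hpη] at h
    by_contra hc
    push Not at hc
    have h3 : δ * (y 1 * φ η) ≤ y 1 * φ 1 :=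
      (mul_le_mul_of_nonneg_left h hδ0.le).trans (by nlinarith)
    nlinarith
  intro x hx
  have h := hq hx h1m hx.2
  have h2 : 0 ≤ y x / φ x := (div_nonneg hy1n hp1.le).trans h
  have hp := hφpos x hx
  by_contra hc
  push Not at hc
  linarith [div_neg_of_neg_of_pos hc hp]
end

section
/- (Maximum principle, negative λ.) Let α ≥ 1, set ν = (1−α)/2, let λ < 0, let 0 < η < 1, and suppose (H_0') holds: δ > 0, K_ν(√|λ|) − δ·η^ν·K_ν(η·√|λ|) ≤ 0, and I_{−ν}(√|λ|) − δ·η^ν·I_{−ν}(η·√|λ|) > 0. If y : [0,1] → ℝ is continuous on [0,1], continuously differentiable on [0,1], twice differentiable on (0,1), and satisfies −(x^α·y'(x))' − λ·x^α·y(x) ≥ 0 for all x ∈ (0,1), y'(0) = 0, and y(1) ≥ δ·y(η), then y(x) ≥ 0 for all x ∈ [0,1]. -/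
lemma mp_summable (a : ℕ → ℝ) (C q : ℝ) (ha : ∀ m, |a m| ≤ C * (q ^ m / m.factorial)) (t : ℝ) :
    Summable (fun m => a m * t ^ m) := by
  have h : Summable (fun m : ℕ => C * ((q * |t|) ^ m / m.factorial)) :=
    (Real.summable_pow_div_factorial (q * |t|)).mul_left C
  refine Summable.of_norm_bounded h (fun m => ?_)
  rw [Real.norm_eq_abs, abs_mul, abs_pow]
  calc |a m| * |t| ^ m ≤ (C * (q ^ m / m.factorial)) * |t| ^ m := by
        gcongr
        exact ha m
    _ = _ := by rw [mul_pow]; ring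

lemma mp_shift (a : ℕ → ℝ) (C q : ℝ) (ha : ∀ m, |a m| ≤ C * (q ^ m / m.factorial)) (m : ℕ) :
    |((m : ℝ) + 1) * a (m + 1)| ≤ (C * q) * (q ^ m / m.factorial) := by
  have hm : (0 : ℝ) < (m : ℝ) + 1 := by positivity
  rw [abs_mul, abs_of_pos hm]
  calc ((m : ℝ) + 1) * |a (m + 1)|
      ≤ ((m : ℝ) + 1) * (C * (q ^ (m + 1) / (m + 1).factorial)) := by
        gcongr
        exact ha _
    _ = _ := by
        rw [Nat.factorial_succ]
        push_cast
        have : (m.factorial : ℝ) ≠ 0 := by positivity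
        field_simp
        ring

lemma mp_hasDerivAt (a : ℕ → ℝ) (C q : ℝ) (ha : ∀ m, |a m| ≤ C * (q ^ m / m.factorial))
    (t : ℝ) :
    HasDerivAt (fun t => ∑' m, a m * t ^ m) (∑' m : ℕ, (((m : ℝ) + 1) * a (m + 1)) * t ^ m) t := by
  set R := |t| + 1 with hR
  have hRpos : 0 < R := by positivity
  have key : HasDerivAt (fun t => ∑' m, a m * t ^ m)
      (∑' m : ℕ, a m * ((m : ℝ) * t ^ (m - 1))) t := by
    refine hasDerivAt_tsum_of_isPreconnected (𝕜 := ℝ) (F := ℝ)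
      (g := fun (m : ℕ) (t : ℝ) => a m * t ^ m)
      (g' := fun (m : ℕ) (t : ℝ) => a m * ((m : ℝ) * t ^ (m - 1)))
      (u := fun m : ℕ => |a m| * ((m : ℝ) * R ^ (m - 1)))
      (t := Metric.ball (0 : ℝ) R) (y₀ := (0 : ℝ)) ?_ Metric.isOpen_ball
      (Convex.isPreconnected (E := ℝ) (convex_ball (0 : ℝ) R)) ?_ ?_ ?_ ?_ ?_
    · rw [← summable_nat_add_iff 1]
      have := (mp_summable _ _ _ (mp_shift a C q ha) R).abs
      refine this.congr (fun m => ?_)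
      have hm : (0 : ℝ) < (m : ℝ) + 1 := by positivity
      rw [abs_mul, abs_mul, abs_of_pos hm, abs_of_pos (pow_pos hRpos m)]
      simp
      ring
    · intro n y hy
      exact (hasDerivAt_pow n y).const_mul (a n)
    · intro n y hy
      have hy' : |y| ≤ R := by
        have := Metric.mem_ball.1 hy
        rw [Real.dist_eq, sub_zero] at this
        exact this.le
      rw [Real.norm_eq_abs, abs_mul, abs_mul, abs_pow, Nat.abs_cast]
      gcongr
    · simpa using hRpos
    · exact mp_summable a C q ha 0
    · simp [hR]
  convert key using 1
  have hs : Summable (fun m : ℕ => a m * ((m : ℝ) * t ^ (m - 1))) := by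
    rw [← summable_nat_add_iff 1]
    refine (mp_summable _ _ _ (mp_shift a C q ha) t).congr (fun m => ?_)
    simp
    ring
  rw [hs.tsum_eq_zero_add]
  simp only [Nat.cast_zero, zero_mul, mul_zero, zero_add]
  refine tsum_congr (fun m => ?_)
  simp
  ring

/-- Existence of the positive solution. -/
lemma mp_solution (α s : ℝ) (hα : 1 ≤ α) (hs : 0 < s) :
    ∃ f f1 f2 : ℝ → ℝ, (∀ x, HasDerivAt f (f1 x) x) ∧ (∀ x, HasDerivAt f1 (f2 x) x) ∧
      (∀ x, 0 < f x) ∧ (∀ x, x * f2 x + α * f1 x = s ^ 2 * x * f x) ∧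
      (∀ x, 0 < x → f x = x ^ ((1 - α) / 2) * besselI (-((1 - α) / 2)) (x * s)) := by
  set μ := -((1 - α) / 2) with hμ
  have hμ0 : 0 ≤ μ := by rw [hμ]; linarith
  set a : ℕ → ℝ := fun m => (1 / ((m.factorial : ℝ) * Real.Gamma ((m : ℝ) + μ + 1))) *
    (s / 2) ^ (2 * (m : ℝ) + μ) with ha
  have hG : ∀ m : ℕ, 0 < Real.Gamma ((m : ℝ) + μ + 1) := fun m =>
    Real.Gamma_pos_of_pos (by positivity)
  have hapos : ∀ m, 0 < a m := by
    intro m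
    have := hG m
    simp only [ha]
    positivity
  have hrec : ∀ m : ℕ, ((m : ℝ) + 1) * ((m : ℝ) + 1 + μ) * a (m + 1) = s ^ 2 / 4 * a m := by
    intro m
    have h1 := hG m
    have h2 : Real.Gamma (((m + 1 : ℕ) : ℝ) + μ + 1)
        = ((m : ℝ) + μ + 1) * Real.Gamma ((m : ℝ) + μ + 1) := by
      rw [← Real.Gamma_add_one (by positivity)]
      push_cast
      ring_nf
    have h3 : (s / 2) ^ (2 * ((m + 1 : ℕ) : ℝ) + μ) = (s / 2) ^ (2 * (m : ℝ) + μ) * (s / 2) ^ 2 := by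
      rw [← Real.rpow_natCast, ← Real.rpow_add (by positivity)]
      push_cast
      ring_nf
    simp only [ha]
    rw [h2, h3, Nat.factorial_succ]
    push_cast
    have : (m.factorial : ℝ) ≠ 0 := by positivity
    have h4 : (m : ℝ) + μ + 1 ≠ 0 := by positivity
    field_simp
    ring
  have hb : ∀ m, |a m| ≤ a 0 * ((s ^ 2 / 4) ^ m / m.factorial) := by
    intro m
    rw [abs_of_pos (hapos m)]
    induction m with
    | zero => simp
    | succ m ih =>
      have hm : (0 : ℝ) < (m : ℝ) + 1 := by positivity
      have h1 : ((m : ℝ) + 1) * a (m + 1) ≤ s ^ 2 / 4 * a m := by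
        rw [← hrec]
        have : 0 < ((m : ℝ) + 1) * a (m + 1) := mul_pos hm (hapos _)
        have h0 : (0 : ℝ) ≤ (m : ℝ) + μ := by positivity
        nlinarith
      have h2 : a (m + 1) ≤ (s ^ 2 / 4 * a m) / ((m : ℝ) + 1) := by
        rw [le_div_iff₀ hm]; linarith
      refine h2.trans ?_
      calc (s ^ 2 / 4 * a m) / ((m : ℝ) + 1)
          ≤ (s ^ 2 / 4 * (a 0 * ((s ^ 2 / 4) ^ m / m.factorial))) / ((m : ℝ) + 1) := by gcongr
        _ = _ := by
          rw [Nat.factorial_succ]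
          push_cast
          have : (m.factorial : ℝ) ≠ 0 := by positivity
          field_simp
          ring
  have hb1 := mp_shift a _ _ hb
  have hb2 := mp_shift _ _ _ hb1
  have hd0 := mp_hasDerivAt a _ _ hb
  have hd1 := mp_hasDerivAt _ _ _ hb1
  have hS0 := mp_summable _ _ _ hb
  have hS1 := mp_summable _ _ _ hb1
  have hS2 := mp_summable _ _ _ hb2
  set g : ℝ → ℝ := fun t => ∑' m, a m * t ^ m with hg
  set g1 : ℝ → ℝ := fun t => ∑' m : ℕ, (((m : ℝ) + 1) * a (m + 1)) * t ^ m with hg1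
  set g2 : ℝ → ℝ := fun t => ∑' m : ℕ,
    (((m : ℝ) + 1) * (((m + 1 : ℕ) : ℝ) + 1) * a (m + 1 + 1)) * t ^ m with hg2
  have hd0' : ∀ t, HasDerivAt g (g1 t) t := hd0
  have hd1' : ∀ t, HasDerivAt g1 (g2 t) t := by
    intro t
    convert hd1 t using 1
    simp only [hg2, mul_assoc]
  have hode : ∀ t, 4 * t * g2 t + 2 * (1 + α) * g1 t = s ^ 2 * g t := by
    intro t
    have e2 : t * g2 t = ∑' m : ℕ, ((m : ℝ) * ((m : ℝ) + 1) * a (m + 1)) * t ^ m := by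
      have hs' : Summable (fun m : ℕ => ((m : ℝ) * ((m : ℝ) + 1) * a (m + 1)) * t ^ m) := by
        rw [← summable_nat_add_iff 1]
        refine ((hS2 t).mul_left t).congr (fun m => ?_)
        push_cast
        ring
      rw [hs'.tsum_eq_zero_add]
      simp only [Nat.cast_zero, zero_mul, zero_add, hg2]
      rw [← tsum_mul_left]
      refine tsum_congr (fun m => ?_)
      push_cast
      ring
    have hs' : Summable (fun m : ℕ => ((m : ℝ) * ((m : ℝ) + 1) * a (m + 1)) * t ^ m) := by
      rw [← summable_nat_add_iff 1]
      refine ((hS2 t).mul_left t).congr (fun m => ?_)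
      push_cast
      ring
    rw [mul_assoc, e2]
    simp only [hg1, hg]
    rw [← tsum_mul_left, ← tsum_mul_left, ← tsum_mul_left,
      ← (hs'.mul_left 4).tsum_add ((hS1 t).mul_left _)]
    refine tsum_congr (fun m => ?_)
    have := hrec m
    have hα' : α = 2 * μ + 1 := by rw [hμ]; ring
    rw [hα']
    linear_combination 4 * t ^ m * this
  have hsq : ∀ x : ℝ, HasDerivAt (fun x : ℝ => x ^ 2) (2 * x) x := by
    intro x
    simpa using hasDerivAt_pow 2 x
  have hf : ∀ x : ℝ, HasDerivAt (fun x => g (x ^ 2)) (2 * x * g1 (x ^ 2)) x := by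
    intro x
    have := (hd0' (x ^ 2)).comp x (hsq x)
    refine this.congr_deriv ?_
    ring
  have hf1 : ∀ x : ℝ, HasDerivAt (fun x => 2 * x * g1 (x ^ 2))
      (2 * g1 (x ^ 2) + 4 * x ^ 2 * g2 (x ^ 2)) x := by
    intro x
    have h1 := (hd1' (x ^ 2)).comp x (hsq x)
    have h2 : HasDerivAt (fun x : ℝ => 2 * x) 2 x := by
      simpa using (hasDerivAt_id x).const_mul 2
    have := h2.mul h1
    refine this.congr_deriv ?_
    simp only [Function.comp]
    ring
  refine ⟨_, _, _, hf, hf1, ?_, ?_, ?_⟩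
  · intro x
    simp only [hg]
    refine (hS0 (x ^ 2)).tsum_pos (fun m => ?_) 0 ?_
    · have := hapos m
      positivity
    · simpa using hapos 0
  · intro x
    have := hode (x ^ 2)
    linear_combination x * this
  · intro x hx
    simp only [hg, besselI]
    rw [← tsum_mul_left]
    refine tsum_congr (fun m => ?_)
    simp only [ha]
    have h1 : x * s / 2 = x * (s / 2) := by ring
    rw [h1, Real.mul_rpow hx.le (by positivity)]
    have h2 : (x ^ 2) ^ m = x ^ ((1 - α) / 2) * x ^ (2 * (m : ℝ) + μ) := by
      rw [← Real.rpow_add hx, ← pow_mul, ← Real.rpow_natCast]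
      congr 1
      push_cast
      rw [hμ]
      ring
    rw [h2]
    ring

/-- **Maximum principle for negative `λ` (Proposition 4.2, (Max₂)).**
For `α ≥ 1`, `ν = (1−α)/2`, `λ < 0`, `0 < η < 1` and hypothesis `(H₀')`:
if `y ∈ C¹[0,1]` is twice differentiable on `(0,1)` and satisfies
`−(x^α y')' − λ x^α y ≥ 0` on `(0,1)`, `y'(0) = 0` and `y(1) ≥ δ·y(η)`,
then `y ≥ 0` on `[0,1]`. -/
theorem maximum_principle_neg_lambda (α lam δ η ν : ℝ) (hα : 1 ≤ α)
    (hν : ν = (1 - α) / 2) (hlam : lam < 0)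
    (hη0 : 0 < η) (hη1 : η < 1) (hδ : 0 < δ)
    (hH1 : besselK ν (Real.sqrt |lam|)
        - δ * η ^ ν * besselK ν (η * Real.sqrt |lam|) ≤ 0)
    (hH2 : 0 < besselI (-ν) (Real.sqrt |lam|)
        - δ * η ^ ν * besselI (-ν) (η * Real.sqrt |lam|))
    (y : ℝ → ℝ)
    (hyc : ContinuousOn y (Set.Icc 0 1))
    (hy1 : ∀ x ∈ Set.Icc (0 : ℝ) 1, DifferentiableAt ℝ y x)
    (hy1c : ContinuousOn (deriv y) (Set.Icc 0 1))
    (hy2 : ∀ x ∈ Set.Ioo (0 : ℝ) 1, DifferentiableAt ℝ (deriv y) x)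
    (hineq : ∀ x ∈ Set.Ioo (0 : ℝ) 1,
      0 ≤ -(α * x ^ (α - 1) * deriv y x + x ^ α * deriv (deriv y) x)
        - lam * x ^ α * y x)
    (hbc0 : deriv y 0 = 0) (hbc1 : δ * y η ≤ y 1) :
    ∀ x ∈ Set.Icc (0 : ℝ) 1, 0 ≤ y x := by
  have hs : 0 < Real.sqrt |lam| := Real.sqrt_pos.2 (abs_pos.2 hlam.ne)
  have hs2 : Real.sqrt |lam| ^ 2 = -lam := by
    rw [Real.sq_sqrt (abs_nonneg _), abs_of_neg hlam]
  obtain ⟨f, f1, f2, hf, hf1, hpos, hode, hB⟩ := mp_solution α _ hα hs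
  have hH : 0 < f 1 - δ * f η := by
    rw [hB 1 one_pos, hB η hη0, Real.one_rpow, one_mul, one_mul, ← hν]
    linarith
  have hfc : Continuous f := continuous_iff_continuousAt.2 fun x => (hf x).continuousAt
  have hf1c : Continuous f1 := continuous_iff_continuousAt.2 fun x => (hf1 x).continuousAt
  have hα0 : 0 < α := by linarith
  set F : ℝ → ℝ := fun x => x ^ α * (deriv y x * f x - y x * f1 x) with hF
  have hFd : ∀ x ∈ Set.Ioo (0 : ℝ) 1, HasDerivAt F
      (α * x ^ (α - 1) * (deriv y x * f x - y x * f1 x) +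
        x ^ α * ((deriv (deriv y) x * f x + deriv y x * f1 x)
          - (deriv y x * f1 x + y x * f2 x))) x := by
    intro x hx
    have h1 := Real.hasDerivAt_rpow_const (x := x) (p := α) (Or.inl hx.1.ne')
    have h2 := (hy2 x hx).hasDerivAt.mul (hf x)
    have h3 := (hy1 x (Set.Ioo_subset_Icc_self hx)).hasDerivAt.mul (hf1 x)
    exact h1.mul (h2.sub h3)
  have hFanti : AntitoneOn F (Set.Icc 0 1) := by
    refine antitoneOn_of_deriv_nonpos (convex_Icc 0 1) ?_ ?_ ?_
    · refine ContinuousOn.mul ?_ ((hy1c.mul hfc.continuousOn).sub (hyc.mul hf1c.continuousOn))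
      exact (Real.continuous_rpow_const hα0.le).continuousOn
    · rw [interior_Icc]
      exact fun x hx => (hFd x hx).differentiableAt.differentiableWithinAt
    · rw [interior_Icc]
      intro x hx
      rw [(hFd x hx).deriv]
      have hxa : x ^ α = x ^ (α - 1) * x := by
        rw [← Real.rpow_add_one hx.1.ne']; ring_nf
      have h1 := mul_nonneg (hpos x).le (hineq x hx)
      have h2 := hode x
      rw [hs2] at h2
      rw [hxa] at h1 ⊢
      have e : α * x ^ (α - 1) * (deriv y x * f x - y x * f1 x) +
        x ^ (α - 1) * x * ((deriv (deriv y) x * f x + deriv y x * f1 x)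
          - (deriv y x * f1 x + y x * f2 x)) = -(f x * (-(α * x ^ (α - 1) * deriv y x
          + x ^ (α - 1) * x * deriv (deriv y) x) - lam * (x ^ (α - 1) * x) * y x)) := by
        linear_combination (-(x ^ (α - 1) * y x)) * h2
      rw [e]
      linarith
  have hW : ∀ x ∈ Set.Ioo (0 : ℝ) 1, deriv y x * f x - y x * f1 x ≤ 0 := by
    intro x hx
    have h := hFanti (Set.left_mem_Icc.2 zero_le_one) (Set.Ioo_subset_Icc_self hx) hx.1.le
    simp only [hF, Real.zero_rpow hα0.ne', zero_mul] at h
    have hxp := Real.rpow_pos_of_pos hx.1 α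
    by_contra hc
    push Not at hc
    have := mul_pos hxp hc
    linarith
  have hu : AntitoneOn (fun x => y x / f x) (Set.Icc 0 1) := by
    have hd : ∀ x ∈ Set.Ioo (0 : ℝ) 1, HasDerivAt (fun x => y x / f x)
        ((deriv y x * f x - y x * f1 x) / f x ^ 2) x := fun x hx =>
      (hy1 x (Set.Ioo_subset_Icc_self hx)).hasDerivAt.div (hf x) (hpos x).ne'
    refine antitoneOn_of_deriv_nonpos (convex_Icc 0 1) ?_ ?_ ?_
    · exact hyc.div hfc.continuousOn (fun x _ => (hpos x).ne')
    · rw [interior_Icc]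
      exact fun x hx => (hd x hx).differentiableAt.differentiableWithinAt
    · rw [interior_Icc]
      intro x hx
      rw [(hd x hx).deriv]
      exact div_nonpos_of_nonpos_of_nonneg (hW x hx) (sq_nonneg _)
  have h1m : (1 : ℝ) ∈ Set.Icc (0 : ℝ) 1 := Set.right_mem_Icc.2 zero_le_one
  have hy1' : 0 ≤ y 1 / f 1 := by
    have h := hu (⟨hη0.le, hη1.le⟩ : η ∈ Set.Icc (0 : ℝ) 1) h1m hη1.le
    simp only at h
    have e1 : y 1 = y 1 / f 1 * f 1 := by rw [div_mul_cancel₀ _ (hpos 1).ne']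
    have e2 : y η = y η / f η * f η := by rw [div_mul_cancel₀ _ (hpos η).ne']
    have h3 : δ * f η * (y 1 / f 1) ≤ δ * f η * (y η / f η) :=
      mul_le_mul_of_nonneg_left h (mul_pos hδ (hpos η)).le
    rw [e1, e2] at hbc1
    by_contra hc
    push Not at hc
    have := mul_neg_of_pos_of_neg hH hc
    nlinarith
  intro x hx
  have h := hy1'.trans (hu hx h1m hx.2)
  simp only at h
  have e : y x = y x / f x * f x := by rw [div_mul_cancel₀ _ (hpos x).ne']
  rw [e]
  exact mul_nonneg h (hpos x).le
end
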